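/- arXiv:2504.00919 — 7 statements merged into one kernel-verified Lean document; each statement's English description precedes it below -/
import Mathlib

section
/- Fix α, τ, τ̃ > 0 and u ∈ ℝ. For x ∈ ℝ let μ_x be the product probability measure on ℝ² whose first factor is Laplace(trim_τ(x), 4τ/α) and whose second factor is Laplace(trim_{τ̃}(x·u), 4τ̃/α). Then for all x, x' ∈ ℝ and every Borel set A ⊆ ℝ² one has μ_x(A) ≤ e^α · μ_{x'}(A). Likewise, if for x ∈ ℝ one sets ν_x := Laplace(trim_τ(x²), 2τ/α), then ν_x(B) ≤ e^α · ν_{x'}(B) for all x, x' ∈ ℝ and every Borel set B ⊆ ℝ. (This is the α-local-differential-privacy property of the interactive mechanism for estimating a covariance coefficient σ_j: in step i with lag j ≥ 1, u plays the role of the previously released value Z_{i−j}; the second claim is the case j = 0.) -/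
open MeasureTheory Real

/-- `trim c x` truncates `x` to the interval `[-c, c]`. -/
noncomputable def trim (c x : ℝ) : ℝ := max (-c) (min x c)

/-- The Laplace distribution with location `m` and scale `b`. -/
noncomputable def laplace (m b : ℝ) : Measure ℝ :=
  volume.withDensity fun z => ENNReal.ofReal ((1 / (2 * b)) * Real.exp (-|z - m| / b))

theorem abs_trim_sub_trim_le {c : ℝ} (hc : 0 < c) (x y : ℝ) :
    |trim c x - trim c y| ≤ 2 * c := by
  have mem_Icc (z : ℝ) : -c ≤ trim c z ∧ trim c z ≤ c :=
    ⟨le_max_left _ _, max_le (by linarith) (min_le_right _ _)⟩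
  rw [abs_le]
  constructor <;> linarith [mem_Icc x, mem_Icc y]

instance sFinite_laplace (m b : ℝ) : SFinite (laplace m b) := by
  unfold laplace
  infer_instance

theorem laplace_le_exp_smul_laplace {m m' b s : ℝ} (hb : 0 < b) (h : |m - m'| ≤ s * b) :
    laplace m b ≤ ENNReal.ofReal (Real.exp s) • laplace m' b := by
  unfold laplace
  rw [← withDensity_smul _ (by fun_prop)]
  refine withDensity_mono (Filter.Eventually.of_forall fun z => ?_)
  simp only [Pi.smul_apply, smul_eq_mul]
  rw [← ENNReal.ofReal_mul (Real.exp_pos s).le]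
  refine ENNReal.ofReal_le_ofReal ?_
  rw [mul_left_comm, ← Real.exp_add]
  gcongr
  rw [← sub_le_iff_le_add, ← mul_le_mul_iff_of_pos_right hb, sub_mul, div_mul_cancel₀ _ hb.ne',
    div_mul_cancel₀ _ hb.ne']
  have := abs_sub_le z m m'
  linarith

theorem prod_apply_le_of_le_smul {X Y : Type*} [MeasurableSpace X] [MeasurableSpace Y]
    {μ μ' : Measure X} {ν ν' : Measure Y} [SFinite ν] [SFinite ν'] {c d : ENNReal}
    (hμ : μ ≤ c • μ') (hν : ν ≤ d • ν') {A : Set (X × Y)} (hA : MeasurableSet A) :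
    μ.prod ν A ≤ c * d * μ'.prod ν' A := by
  rw [Measure.prod_apply hA, Measure.prod_apply hA]
  calc ∫⁻ x, ν (Prod.mk x ⁻¹' A) ∂μ
      ≤ ∫⁻ x, d * ν' (Prod.mk x ⁻¹' A) ∂(c • μ') := lintegral_mono' hμ fun x => hν _
    _ = c * d * ∫⁻ x, ν' (Prod.mk x ⁻¹' A) ∂μ' := by
      rw [lintegral_smul_measure, lintegral_const_mul _ (measurable_measure_prodMk_left hA),
        smul_eq_mul, mul_assoc]

/-- α-LDP property of the interactive mechanism for estimating a covariance coefficient. -/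
theorem ldp_interactive_covariance_mechanism
    (α τ τ' : ℝ) (hα : 0 < α) (hτ : 0 < τ) (hτ' : 0 < τ') (u : ℝ) :
    (∀ x x' : ℝ, ∀ A : Set (ℝ × ℝ), MeasurableSet A →
      ((laplace (trim τ x) (4 * τ / α)).prod
          (laplace (trim τ' (x * u)) (4 * τ' / α))) A ≤
        ENNReal.ofReal (Real.exp α) *
          ((laplace (trim τ x') (4 * τ / α)).prod
            (laplace (trim τ' (x' * u)) (4 * τ' / α))) A) ∧
    (∀ x x' : ℝ, ∀ B : Set ℝ, MeasurableSet B →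
      laplace (trim τ (x ^ 2)) (2 * τ / α) B ≤
        ENNReal.ofReal (Real.exp α) * laplace (trim τ (x' ^ 2)) (2 * τ / α) B) := by
  refine ⟨fun x x' A hA => ?_, fun x x' B _ => ?_⟩
  · have half_budget {c : ℝ} (hc : 0 < c) (y y' : ℝ) :
        laplace (trim c y) (4 * c / α) ≤
          ENNReal.ofReal (Real.exp (α / 2)) • laplace (trim c y') (4 * c / α) := by
      refine laplace_le_exp_smul_laplace (by positivity)
        ((abs_trim_sub_trim_le hc y y').trans_eq ?_)
      field_simp
      norm_num
    refine (prod_apply_le_of_le_smul (half_budget hτ x x')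
      (half_budget hτ' (x * u) (x' * u)) hA).trans_eq ?_
    rw [← ENNReal.ofReal_mul (Real.exp_pos _).le, ← Real.exp_add, add_halves]
  · refine laplace_le_exp_smul_laplace (by positivity)
      ((abs_trim_sub_trim_le hτ (x ^ 2) (x' ^ 2)).trans_eq ?_) B
    field_simp
end

section
/- Fix α, τ, τ̃ > 0, an integer K ≥ 1, ω ∈ [−π, π], and u_1, …, u_K ∈ ℝ. Define weights a_k := 1 for 1 ≤ k ≤ K/2 and a_k := 2(1 − k/K) for K/2 < k ≤ K, and for x ∈ ℝ set V(x) := x² + Σ_{k=1}^K 2 a_k cos(kω) · x · u_k. Let μ_x be the product probability measure on ℝ² whose first factor is Laplace(trim_τ(x), 4τ/α) and whose second factor is Laplace(trim_{τ̃}(V(x)), 4τ̃/α). Then for all x, x' ∈ ℝ and every Borel set A ⊆ ℝ², μ_x(A) ≤ e^α · μ_{x'}(A). (This is the α-local-differential-privacy property of the interactive mechanism for pointwise estimation of the spectral density, where u_1,…,u_K play the role of the previously released values Z_{i−1},…,Z_{i−K}.) -/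
open MeasureTheory Real

/-- The weights `a_k`: `1` for `1 ≤ k ≤ K/2` and `2(1 - k/K)` for `K/2 < k ≤ K`. -/
noncomputable def weightA (K k : ℕ) : ℝ :=
  if (2 * k : ℝ) ≤ K then 1 else 2 * (1 - (k : ℝ) / K)

theorem laplace_le_smul_laplace {m m' b ε : ℝ} (hb : 0 < b) (h : |m - m'| ≤ ε * b) :
    laplace m b ≤ ENNReal.ofReal (Real.exp ε) • laplace m' b := by
  unfold laplace
  rw [← withDensity_smul _ (by fun_prop)]
  refine withDensity_mono (Filter.Eventually.of_forall fun z => ?_)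
  rw [Pi.smul_apply, smul_eq_mul, ← ENNReal.ofReal_mul (Real.exp_pos _).le]
  refine ENNReal.ofReal_le_ofReal ?_
  rw [mul_left_comm, ← Real.exp_add]
  gcongr
  rw [div_le_iff₀ hb, add_mul, div_mul_cancel₀ _ hb.ne']
  linarith [abs_sub_le z m m']

theorem laplace_trim_le {α c : ℝ} (hα : 0 < α) (hc : 0 < c) (x y : ℝ) :
    laplace (trim c x) (4 * c / α) ≤
      ENNReal.ofReal (Real.exp (α / 2)) • laplace (trim c y) (4 * c / α) := by
  refine laplace_le_smul_laplace (by positivity) ((abs_trim_sub_trim_le hc x y).trans_eq ?_)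
  field_simp
  norm_num

/-- Composition of privacy guarantees: multiplicative domination passes to products. -/
theorem prod_apply_le_mul_of_le_smul {X Y : Type*} [MeasurableSpace X] [MeasurableSpace Y]
    {μ μ' : Measure X} {ν ν' : Measure Y} [SFinite ν] [SFinite ν'] {a b : ENNReal}
    (hμ : μ ≤ a • μ') (hν : ν ≤ b • ν') {A : Set (X × Y)} (hA : MeasurableSet A) :
    (μ.prod ν) A ≤ a * b * (μ'.prod ν') A := by
  rw [Measure.prod_apply hA, Measure.prod_apply hA]
  calc ∫⁻ x, ν (Prod.mk x ⁻¹' A) ∂μ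
      ≤ ∫⁻ x, b * ν' (Prod.mk x ⁻¹' A) ∂(a • μ') := lintegral_mono' hμ fun _ => hν _
    _ = a * b * ∫⁻ x, ν' (Prod.mk x ⁻¹' A) ∂μ' := by
      rw [lintegral_smul_measure, lintegral_const_mul _ (measurable_measure_prodMk_left hA),
        smul_eq_mul, mul_assoc]

/-- α-LDP property of the interactive mechanism for pointwise spectral density
estimation: `u 1, …, u K` play the role of the previously released values. -/
theorem ldp_interactive_pointwise_mechanism
    (α τ τ' : ℝ) (hα : 0 < α) (hτ : 0 < τ) (hτ' : 0 < τ')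
    (K : ℕ) (hK : 1 ≤ K) (ω : ℝ) (hω : ω ∈ Set.Icc (-π) π) (u : ℕ → ℝ) :
    ∀ x x' : ℝ, ∀ A : Set (ℝ × ℝ), MeasurableSet A →
      ((laplace (trim τ x) (4 * τ / α)).prod
          (laplace
            (trim τ' (x ^ 2 + ∑ k ∈ Finset.Icc 1 K,
              2 * weightA K k * Real.cos (k * ω) * x * u k))
            (4 * τ' / α))) A ≤
        ENNReal.ofReal (Real.exp α) *
          ((laplace (trim τ x') (4 * τ / α)).prod
            (laplace
              (trim τ' (x' ^ 2 + ∑ k ∈ Finset.Icc 1 K,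
                2 * weightA K k * Real.cos (k * ω) * x' * u k))
              (4 * τ' / α))) A := by
  intro x x' A hA
  have hexp : ENNReal.ofReal (Real.exp α) =
      ENNReal.ofReal (Real.exp (α / 2)) * ENNReal.ofReal (Real.exp (α / 2)) := by
    rw [← ENNReal.ofReal_mul (Real.exp_pos _).le, ← Real.exp_add, add_halves]
  rw [hexp]
  exact prod_apply_le_mul_of_le_smul (laplace_trim_le hα hτ _ _) (laplace_trim_le hα hτ' _ _) hA
end

section
/- Let δ > 0 and M₁ > 0, and let R : ℕ → ℕ satisfy 0 < R(n) < n for all n and R(n)/n → 0. There is a constant c > 0, depending only on M₁ and δ, such that for every α ∈ (0,1) there is N ∈ ℕ with the following property for all n ≥ N. Set τ_n := (8 log^{1+δ} n)^{1/2} and τ̃_n := 16 log^{1+δ}(n) · τ_n². Let (σ_k)_{k∈ℤ} be any valid autocovariance sequence of size n with Σ_{k∈ℤ} σ_k² ≤ M₁, let X = (X_1,…,X_n) be the corresponding centered Gaussian vector, and, independently of X, let ξ_1,…,ξ_n be i.i.d. Laplace(0, 4τ_n/α) and ξ̃_1,…,ξ̃_n be i.i.d. Laplace(0, 4τ̃_n/α),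 with (ξ_i) and (ξ̃_i) mutually independent. Define Z_i := trim_{τ_n}(X_i) + ξ_i for i = 1,…,n, and for an integer j with 1 ≤ j ≤ R(n) the estimator σ̂_j := (1/(n−j)) Σ_{i=j+1}^n [ trim_{τ̃_n}( X_i · Z_{i−j} ) + ξ̃_i ]. Then E[(σ̂_j − σ_j)²] ≤ c · max{ 1/n, log^{4+4δ}(n)/(n α²) } for every such j. -/
open MeasureTheory ProbabilityTheory Real

/-- The `n × n` Toeplitz matrix `(σ_{|i-k|})` built from a sequence `σ : ℤ → ℝ`. -/
noncomputable def toeplitz (n : ℕ) (σ : ℤ → ℝ) : Matrix (Fin n) (Fin n) ℝ :=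
  fun i k => σ |(i : ℤ) - (k : ℤ)|

/-- `μ` is the centered Gaussian measure on `ℝⁿ` with covariance matrix `S`
(Cramér–Wold characterisation: every linear functional is Gaussian with the
corresponding variance). -/
def IsCenteredGaussian {n : ℕ} (μ : Measure (Fin n → ℝ)) (S : Matrix (Fin n) (Fin n) ℝ) : Prop :=
  ∀ a : Fin n → ℝ,
    μ.map (fun x => ∑ i, a i * x i) =
      gaussianReal 0 (∑ i, ∑ k, a i * S i k * a k).toNNReal

/-- The interactive private estimator of the covariance coefficient `σ_j`:
`w = (X, ξ, ξ̃)` and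
`σ̂_j = (1/(n-j)) ∑_{i=j+1}^n [ trim_{τ'}(X_i (trim_τ(X_{i-j}) + ξ_{i-j})) + ξ̃_i ]`. -/
noncomputable def sigmaHat (n j : ℕ) (τ τ' : ℝ)
    (w : (Fin n → ℝ) × (Fin n → ℝ) × (Fin n → ℝ)) : ℝ :=
  ((n : ℝ) - j)⁻¹ *
    ∑ i : Fin (n - j),
      (trim τ'
          (w.1 ⟨i.1 + j, by have := i.isLt; omega⟩ *
            (trim τ (w.1 ⟨i.1, by have := i.isLt; omega⟩) +
              w.2.1 ⟨i.1, by have := i.isLt; omega⟩)) +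
        w.2.2 ⟨i.1 + j, by have := i.isLt; omega⟩)

/-- The fourth moment of a centered Gaussian is `3 v²`. -/
lemma integral_pow_four_gaussianReal (v : NNReal) :
    ∫ x, x ^ 4 ∂gaussianReal 0 v = 3 * (v : ℝ) ^ 2 := by
  have h0 : (0 : ℝ) ∈ interior (integrableExpSet (id : ℝ → ℝ) (gaussianReal 0 v)) := by
    rw [integrableExpSet_id_gaussianReal, interior_univ]
    trivial
  have h := iteratedDeriv_mgf_zero (μ := gaussianReal 0 v) h0 4
  have hexp : ∀ t : ℝ, HasDerivAt (fun t : ℝ => rexp (0 * t + v * t ^ 2 / 2))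
      (rexp (0 * t + v * t ^ 2 / 2) * (v * t)) t := fun t => by
    have h2 : HasDerivAt (fun t : ℝ => 0 * t + v * t ^ 2 / 2) (v * t) t := by
      refine (((hasDerivAt_id' t).const_mul (0 : ℝ)).add
        (((hasDerivAt_pow 2 t).const_mul (v : ℝ)).div_const 2)).congr_deriv ?_
      norm_num
      ring
    exact h2.exp
  have hpoly : ∀ (p p' : ℝ → ℝ), (∀ t, HasDerivAt p (p' t) t) →
      deriv (fun t => p t * rexp (0 * t + v * t ^ 2 / 2)) =
        fun t => (p' t + p t * (v * t)) * rexp (0 * t + v * t ^ 2 / 2) := fun p p' hp => by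
    funext t
    rw [((hp t).fun_mul (hexp t)).deriv]
    ring
  have hpow : ∀ (k : ℕ) (c t : ℝ), HasDerivAt (fun t : ℝ => c * t ^ k)
      (c * (k * t ^ (k - 1))) t := fun k c t => (hasDerivAt_pow k t).const_mul c
  have d1 : deriv (fun t : ℝ => rexp (0 * t + v * t ^ 2 / 2)) =
      fun t => (v * t ^ 1) * rexp (0 * t + v * t ^ 2 / 2) := by
    funext t
    rw [(hexp t).deriv]
    ring
  have d2 := hpoly (fun t => v * t ^ 1) _ (hpow 1 v)
  have d3 := hpoly (fun t => v + v ^ 2 * t ^ 2) _ (fun t => (hpow 2 ((v : ℝ) ^ 2) t).const_add (v : ℝ))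
  have d4 := hpoly (fun t => 3 * v ^ 2 * t ^ 1 + v ^ 3 * t ^ 3) _
    (fun t => (hpow 1 (3 * (v : ℝ) ^ 2) t).add (hpow 3 ((v : ℝ) ^ 3) t))
  have e2 : deriv (fun t : ℝ => (v * t ^ 1) * rexp (0 * t + v * t ^ 2 / 2)) =
      fun t => (v + v ^ 2 * t ^ 2) * rexp (0 * t + v * t ^ 2 / 2) := by
    rw [d2]
    funext t
    norm_num
    ring
  have e3 : deriv (fun t : ℝ => (v + v ^ 2 * t ^ 2) * rexp (0 * t + v * t ^ 2 / 2)) =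
      fun t => (3 * v ^ 2 * t ^ 1 + v ^ 3 * t ^ 3) * rexp (0 * t + v * t ^ 2 / 2) := by
    rw [d3]
    funext t
    norm_num
    ring
  rw [mgf_id_gaussianReal] at h
  simp only [iteratedDeriv_succ, iteratedDeriv_zero] at h
  rw [d1, e2, e3, d4] at h
  simp at h
  exact h.symm

lemma pow_le_factorial_mul_exp_abs (k : ℕ) (hk : Even k) (x : ℝ) :
    x ^ k ≤ k.factorial * rexp |x| := by
  have h := pow_div_factorial_le_exp (x := |x|) (abs_nonneg x) k
  rw [hk.pow_abs, div_le_iff₀ (by positivity)] at h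
  linarith

section Laplace

variable {b : ℝ}

lemma integrable_exp_neg_mul_abs {r : ℝ} (hr : 0 < r) :
    Integrable (fun z : ℝ => rexp (-r * |z|)) := by
  have h : IntegrableOn (fun z : ℝ => rexp (-r * z)) (Set.Ioi 0) :=
    integrableOn_exp_mul_Ioi (by linarith) 0
  refine Integrable.mono' (g := fun z => (Set.Ioi 0).indicator (fun z : ℝ => rexp (-r * z)) z +
    ((Set.Ioi 0).indicator (fun z : ℝ => rexp (-r * z)) (-z) + (Set.indicator {0} 1 z))) ?_ ?_ ?_
  · have h1 := (integrable_indicator_iff measurableSet_Ioi).2 h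
    refine h1.add (h1.comp_neg.add ?_)
    rw [integrable_indicator_iff (measurableSet_singleton 0)]
    simp
  · fun_prop
  · refine Filter.Eventually.of_forall fun z => ?_
    rw [Real.norm_of_nonneg (exp_pos _).le]
    rcases lt_trichotomy z 0 with hz | hz | hz
    · have : ¬ (0 < z) := by linarith
      simp [Set.indicator, hz, this, abs_of_neg hz, hz.ne]
    · simp [hz]
    · have : ¬ (z < 0) := by linarith
      simp [Set.indicator, hz, this, abs_of_pos hz, hz.ne']

lemma integral_exp_neg_mul_abs {r : ℝ} (hr : 0 < r) :
    ∫ z : ℝ, rexp (-r * |z|) = 2 / r := by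
  rw [integral_comp_abs (f := fun z => rexp (-r * z)), integral_exp_mul_Ioi (by linarith) 0]
  simp
  field_simp

lemma laplace_zero_eq (b : ℝ) : laplace 0 b = volume.withDensity
    fun z => ENNReal.ofReal ((1 / (2 * b)) * rexp (-b⁻¹ * |z|)) := by
  unfold laplace
  congr with z
  congr 3
  rw [sub_zero]
  ring

lemma integrable_laplace_iff (hb : 0 < b) {g : ℝ → ℝ} :
    Integrable g (laplace 0 b) ↔
      Integrable fun z => (1 / (2 * b)) * rexp (-b⁻¹ * |z|) * g z := by
  rw [laplace_zero_eq, integrable_withDensity_iff_integrable_smul' (by fun_prop) (by simp)]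
  refine integrable_congr (Filter.Eventually.of_forall fun z => ?_)
  simp only [smul_eq_mul]
  rw [ENNReal.toReal_ofReal (by positivity)]

lemma integral_laplace_eq (hb : 0 < b) (g : ℝ → ℝ) :
    ∫ z, g z ∂laplace 0 b = ∫ z, (1 / (2 * b)) * rexp (-b⁻¹ * |z|) * g z := by
  rw [laplace_zero_eq, integral_withDensity_eq_integral_toReal_smul (by fun_prop) (by simp)]
  refine integral_congr_ae (Filter.Eventually.of_forall fun z => ?_)
  simp only [smul_eq_mul]
  rw [ENNReal.toReal_ofReal (by positivity)]

lemma isProbabilityMeasure_laplace (hb : 0 < b) : IsProbabilityMeasure (laplace 0 b) := by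
  refine ⟨?_⟩
  rw [laplace_zero_eq, withDensity_apply _ MeasurableSet.univ, setLIntegral_univ,
    ← ofReal_integral_eq_lintegral_ofReal]
  · rw [integral_const_mul, integral_exp_neg_mul_abs (inv_pos.2 hb)]
    simp
    field_simp
  · exact (integrable_exp_neg_mul_abs (inv_pos.2 hb)).const_mul _
  · exact Filter.Eventually.of_forall fun z => by positivity

lemma laplace_exp_abs_aux (hb : 0 < b) (z : ℝ) :
    (1 / (2 * b)) * rexp (-b⁻¹ * |z|) * rexp (|z| / (2 * b)) =
      (1 / (2 * b)) * rexp (-(2 * b)⁻¹ * |z|) := by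
  rw [mul_assoc, ← Real.exp_add]
  congr 2
  field_simp
  ring

lemma integrable_exp_abs_laplace (hb : 0 < b) :
    Integrable (fun z => rexp (|z| / (2 * b))) (laplace 0 b) := by
  rw [integrable_laplace_iff hb]
  simp_rw [laplace_exp_abs_aux hb]
  exact (integrable_exp_neg_mul_abs (by positivity)).const_mul _

lemma integral_exp_abs_laplace (hb : 0 < b) :
    ∫ z, rexp (|z| / (2 * b)) ∂laplace 0 b = 2 := by
  rw [integral_laplace_eq hb]
  simp_rw [laplace_exp_abs_aux hb]
  rw [integral_const_mul, integral_exp_neg_mul_abs (by positivity)]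
  field_simp

lemma integral_id_laplace (hb : 0 < b) : ∫ z, z ∂laplace 0 b = 0 := by
  rw [integral_laplace_eq hb]
  have h := integral_neg_eq_self (fun z => (1 / (2 * b)) * rexp (-b⁻¹ * |z|) * z) volume
  simp only [abs_neg, mul_neg] at h
  rw [integral_neg] at h
  linarith

lemma pow_le_mul_exp_abs_div (hb : 0 < b) (k : ℕ) (hk : Even k) (z : ℝ) :
    z ^ k ≤ (k.factorial * (2 * b) ^ k) * rexp (|z| / (2 * b)) := by
  have h := pow_le_factorial_mul_exp_abs k hk (z / (2 * b))
  rw [div_pow, div_le_iff₀ (by positivity), abs_div, abs_of_pos (by positivity : 0 < 2 * b)] at h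
  linarith

lemma integrable_pow_laplace (hb : 0 < b) (k : ℕ) (hk : Even k) :
    Integrable (fun z => z ^ k) (laplace 0 b) := by
  refine ((integrable_exp_abs_laplace hb).const_mul (k.factorial * (2 * b) ^ k)).mono'
    (by fun_prop) (Filter.Eventually.of_forall fun z => ?_)
  rw [Real.norm_of_nonneg (hk.pow_nonneg z)]
  exact pow_le_mul_exp_abs_div hb k hk z

lemma integral_pow_laplace_le (hb : 0 < b) (k : ℕ) (hk : Even k) :
    ∫ z, z ^ k ∂laplace 0 b ≤ 2 * (k.factorial * (2 * b) ^ k) := by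
  refine (integral_mono (integrable_pow_laplace hb k hk)
    ((integrable_exp_abs_laplace hb).const_mul _) (pow_le_mul_exp_abs_div hb k hk)).trans ?_
  rw [integral_const_mul, integral_exp_abs_laplace hb]
  linarith

end Laplace

section Gaussian

variable {Ω : Type*} [MeasurableSpace Ω] {P : Measure Ω} {n : ℕ}
  {S : Matrix (Fin n) (Fin n) ℝ} {X : Fin n → Ω → ℝ}

lemma sum_mul_mul_nonneg (hS : S.PosSemidef) (a : Fin n → ℝ) :
    0 ≤ ∑ i, ∑ k, a i * S i k * a k := by
  have h := hS.dotProduct_mulVec_nonneg a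
  simp only [dotProduct, Matrix.mulVec, Finset.mul_sum, star_trivial] at h
  simpa only [mul_assoc] using h

lemma map_coord_eq (hX : ∀ a : Fin n → ℝ, P.map (fun ω => ∑ i, a i * X i ω) =
      gaussianReal 0 (∑ i, ∑ k, a i * S i k * a k).toNNReal) (p : Fin n) :
    P.map (X p) = gaussianReal 0 (S p p).toNNReal := by
  have h := hX (Pi.single p 1)
  simpa [Pi.single_apply] using h

lemma memLp_coord (hXm : ∀ i, Measurable (X i))
    (hX : ∀ a : Fin n → ℝ, P.map (fun ω => ∑ i, a i * X i ω) =
      gaussianReal 0 (∑ i, ∑ k, a i * S i k * a k).toNNReal)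
    (p : Fin n) (q : ENNReal) (hq : q ≠ ⊤) : MemLp (X p) q P := by
  have h := memLp_id_gaussianReal' (μ := 0) (v := (S p p).toNNReal) q hq
  rw [← map_coord_eq hX p] at h
  exact h.comp_of_map (hXm p).aemeasurable

lemma memLp_two_mul_of_memLp_four {f g : Ω → ℝ} (hf : MemLp f 4 P) (hg : MemLp g 4 P) :
    MemLp (fun ω => f ω * g ω) 2 P := by
  have : ENNReal.HolderTriple 4 4 2 := ⟨by
    rw [← two_mul, show (4 : ENNReal) = 2 * 2 by norm_num,
      ENNReal.mul_inv (by simp) (by simp), ← mul_assoc, ENNReal.mul_inv_cancel (by simp) (by simp),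
      one_mul]⟩
  exact hg.mul hf

lemma integral_sum_sq {m : ℕ} {Y : Fin m → Ω → ℝ} (hY : ∀ i, MemLp (Y i) 2 P) :
    ∫ ω, (∑ i, Y i ω) ^ 2 ∂P = ∑ i, ∑ k, ∫ ω, Y i ω * Y k ω ∂P := by
  have h : ∀ i k, Integrable (fun ω => Y i ω * Y k ω) P := fun i k =>
    (hY i).integrable_mul (hY k)
  simp_rw [sq, Finset.sum_mul_sum]
  rw [integral_finsetSum _ fun i _ => integrable_finsetSum _ fun k _ => h i k]
  exact Finset.sum_congr rfl fun i _ => integral_finsetSum _ fun k _ => h i k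

lemma integral_combination_sq (hS : S.PosSemidef) (hXm : ∀ i, Measurable (X i))
    (hX : ∀ a : Fin n → ℝ, P.map (fun ω => ∑ i, a i * X i ω) =
      gaussianReal 0 (∑ i, ∑ k, a i * S i k * a k).toNNReal) (a : Fin n → ℝ) :
    ∫ ω, (∑ i, a i * X i ω) ^ 2 ∂P = ∑ i, ∑ k, a i * S i k * a k := by
  have h1 : ∫ x, x ^ 2 ∂(P.map (fun ω => ∑ i, a i * X i ω)) = ∫ ω, (∑ i, a i * X i ω) ^ 2 ∂P :=
    integral_map (by fun_prop) (by fun_prop)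
  have h2 := variance_fun_id_gaussianReal (μ := 0) (v := (∑ i, ∑ k, a i * S i k * a k).toNNReal)
  rw [variance_of_integral_eq_zero (by fun_prop) integral_id_gaussianReal,
    coe_toNNReal _ (sum_mul_mul_nonneg hS a)] at h2
  rw [← h1, hX a, h2]

lemma integral_combination_pow_four (hS : S.PosSemidef) (hXm : ∀ i, Measurable (X i))
    (hX : ∀ a : Fin n → ℝ, P.map (fun ω => ∑ i, a i * X i ω) =
      gaussianReal 0 (∑ i, ∑ k, a i * S i k * a k).toNNReal) (a : Fin n → ℝ) :
    ∫ ω, (∑ i, a i * X i ω) ^ 4 ∂P = 3 * (∑ i, ∑ k, a i * S i k * a k) ^ 2 := by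
  have h1 : ∫ x, x ^ 4 ∂(P.map (fun ω => ∑ i, a i * X i ω)) = ∫ ω, (∑ i, a i * X i ω) ^ 4 ∂P :=
    integral_map (by fun_prop) (by fun_prop)
  rw [← h1, hX a, integral_pow_four_gaussianReal, coe_toNNReal _ (sum_mul_mul_nonneg hS a)]

lemma posSemidef_apply_comm (hS : S.PosSemidef) (p q : Fin n) : S p q = S q p := by
  simpa using (hS.isHermitian.apply p q).symm

lemma integral_mul_eq_cov (hS : S.PosSemidef) (hXm : ∀ i, Measurable (X i))
    (hX : ∀ a : Fin n → ℝ, P.map (fun ω => ∑ i, a i * X i ω) =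
      gaussianReal 0 (∑ i, ∑ k, a i * S i k * a k).toNNReal) (p q : Fin n) :
    ∫ ω, X p ω * X q ω ∂P = S p q := by
  have key : ∀ t : ℝ, ∫ ω, (X p ω + t * X q ω) ^ 2 ∂P =
      S p p + t * S p q + t * S q p + t ^ 2 * S q q := fun t => by
    have h := integral_combination_sq hS hXm hX (Pi.single p 1 + t • Pi.single q 1)
    simp only [Pi.add_apply, Pi.smul_apply, Pi.single_apply, smul_eq_mul, mul_ite, mul_one,
      mul_zero, add_mul, mul_add, ite_mul, zero_mul, one_mul, Finset.sum_add_distrib,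
      Finset.sum_ite_eq', Finset.mem_univ, if_true] at h
    rw [h]
    ring
  have hL : ∀ t : ℝ, Integrable (fun ω => (X p ω + t * X q ω) ^ 2) P := fun t =>
    ((memLp_coord hXm hX p 2 (by simp)).add
      ((memLp_coord hXm hX q 2 (by simp)).const_mul t)).integrable_sq
  have hpt : ∀ ω, X p ω * X q ω =
      (1 / 4) * ((X p ω + 1 * X q ω) ^ 2 - (X p ω + (-1) * X q ω) ^ 2) := fun ω => by ring
  simp_rw [hpt]
  rw [integral_const_mul, integral_sub (hL _) (hL _), key, key, posSemidef_apply_comm hS q p]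
  ring

lemma sum_sign_pow_four (a b c d : ℝ) :
    ∑ s ∈ ({1, -1} : Finset ℝ), ∑ t ∈ ({1, -1} : Finset ℝ), ∑ u ∈ ({1, -1} : Finset ℝ),
      s * t * u * (a + s * b + t * c + u * d) ^ 4 = 192 * (a * b * c * d) := by
  have h : (1 : ℝ) ≠ -1 := by norm_num
  simp only [Finset.sum_pair h]
  ring

/-- Wick's formula for the fourth mixed moments of a centered Gaussian vector. -/
lemma integral_mul_mul_mul_eq (hS : S.PosSemidef) (hXm : ∀ i, Measurable (X i))
    (hX : ∀ a : Fin n → ℝ, P.map (fun ω => ∑ i, a i * X i ω) =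
      gaussianReal 0 (∑ i, ∑ k, a i * S i k * a k).toNNReal) (p q r l : Fin n) :
    ∫ ω, X p ω * X q ω * X r ω * X l ω ∂P =
      S p q * S r l + S p r * S q l + S p l * S q r := by
  have key : ∀ s t u : ℝ, ∫ ω, (X p ω + s * X q ω + t * X r ω + u * X l ω) ^ 4 ∂P =
      3 * (S p p + s ^ 2 * S q q + t ^ 2 * S r r + u ^ 2 * S l l + 2 * (s * S p q + t * S p r +
        u * S p l + s * t * S q r + s * u * S q l + t * u * S r l)) ^ 2 := fun s t u => by
    have h := integral_combination_pow_four hS hXm hX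
      (Pi.single p 1 + s • Pi.single q 1 + t • Pi.single r 1 + u • Pi.single l 1)
    simp only [Pi.add_apply, Pi.smul_apply, Pi.single_apply, smul_eq_mul, mul_ite, mul_one,
      mul_zero, add_mul, mul_add, ite_mul, zero_mul, one_mul, Finset.sum_add_distrib,
      Finset.sum_ite_eq', Finset.mem_univ, if_true] at h
    rw [h, posSemidef_apply_comm hS q p, posSemidef_apply_comm hS r p,
      posSemidef_apply_comm hS l p, posSemidef_apply_comm hS r q, posSemidef_apply_comm hS l q,
      posSemidef_apply_comm hS l r]
    ring
  have hL : ∀ s t u : ℝ,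
      Integrable (fun ω => (X p ω + s * X q ω + t * X r ω + u * X l ω) ^ 4) P := fun s t u => by
    have h4 := fun i => memLp_coord hXm hX i 4 (by simp)
    have h := (((h4 p).add ((h4 q).const_mul s)).add ((h4 r).const_mul t)).add
      ((h4 l).const_mul u)
    refine ((memLp_two_mul_of_memLp_four h h).integrable_sq).congr
      (Filter.Eventually.of_forall fun ω => ?_)
    simp only [Pi.add_apply]
    ring
  have hInt : ∫ ω, 192 * (X p ω * X q ω * X r ω * X l ω) ∂P =
      192 * (S p q * S r l + S p r * S q l + S p l * S q r) := by
    simp_rw [← sum_sign_pow_four]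
    rw [integral_finsetSum _ fun s _ => integrable_finsetSum _ fun t _ =>
      integrable_finsetSum _ fun u _ => (hL s t u).const_mul _]
    simp_rw [fun s : ℝ => integral_finsetSum ({1, -1} : Finset ℝ) fun t _ =>
      integrable_finsetSum ({1, -1} : Finset ℝ) fun u _ => (hL s t u).const_mul (s * t * u),
      fun s t : ℝ => integral_finsetSum ({1, -1} : Finset ℝ) fun u _ =>
        (hL s t u).const_mul (s * t * u), integral_const_mul, key]
    have h : (1 : ℝ) ≠ -1 := by norm_num
    simp only [Finset.sum_pair h]
    ring
  rw [integral_const_mul] at hInt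
  linarith

/-- The variance of an empirical covariance of a centered Gaussian vector. -/
lemma integral_sum_centered_sq [IsProbabilityMeasure P] (hS : S.PosSemidef)
    (hXm : ∀ i, Measurable (X i))
    (hX : ∀ a : Fin n → ℝ, P.map (fun ω => ∑ i, a i * X i ω) =
      gaussianReal 0 (∑ i, ∑ k, a i * S i k * a k).toNNReal) {m : ℕ} (f g : Fin m → Fin n) :
    ∫ ω, (∑ i, (X (f i) ω * X (g i) ω - S (f i) (g i))) ^ 2 ∂P =
      ∑ i, ∑ k, (S (f i) (f k) * S (g i) (g k) + S (f i) (g k) * S (g i) (f k)) := by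
  have h2 : ∀ i, MemLp (fun ω => X (f i) ω * X (g i) ω - S (f i) (g i)) 2 P := fun i =>
    (memLp_two_mul_of_memLp_four (memLp_coord hXm hX _ 4 (by simp))
      (memLp_coord hXm hX _ 4 (by simp))).sub (memLp_const _)
  rw [integral_sum_sq h2]
  refine Finset.sum_congr rfl fun i _ => Finset.sum_congr rfl fun k _ => ?_
  have hm : ∀ i, MemLp (fun ω => X (f i) ω * X (g i) ω) 2 P := fun i =>
    memLp_two_mul_of_memLp_four (memLp_coord hXm hX _ 4 (by simp))
      (memLp_coord hXm hX _ 4 (by simp))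
  have hpt : ∀ ω, (X (f i) ω * X (g i) ω - S (f i) (g i)) *
      (X (f k) ω * X (g k) ω - S (f k) (g k)) =
      (X (f i) ω * X (g i) ω * X (f k) ω * X (g k) ω - S (f k) (g k) * (X (f i) ω * X (g i) ω)) -
      (S (f i) (g i) * (X (f k) ω * X (g k) ω) - S (f i) (g i) * S (f k) (g k)) := fun ω => by ring
  simp_rw [hpt]
  have i4 : Integrable (fun ω => X (f i) ω * X (g i) ω * X (f k) ω * X (g k) ω) P :=
    ((hm i).integrable_mul (hm k)).congr (Filter.Eventually.of_forall fun ω => by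
      simp only [Pi.mul_apply]; ring)
  have i2 : ∀ i, Integrable (fun ω => X (f i) ω * X (g i) ω) P := fun i =>
    (hm i).integrable (by norm_num)
  rw [integral_sub (i4.sub' ((i2 i).const_mul _))
      (((i2 k).const_mul _).sub' (integrable_const _)),
    integral_sub i4 ((i2 i).const_mul _), integral_sub ((i2 k).const_mul _) (integrable_const _),
    integral_const_mul, integral_const_mul, integral_mul_eq_cov hS hXm hX,
    integral_mul_eq_cov hS hXm hX, integral_mul_mul_mul_eq hS hXm hX]
  simp
  ring

end Gaussian

section Trim

lemma abs_trim_le_abs {c : ℝ} (hc : 0 ≤ c) (x : ℝ) : |trim c x| ≤ |x| := by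
  unfold trim
  rcases abs_cases x with ⟨h, _⟩ | ⟨h, _⟩ <;> rw [h, abs_le] <;> constructor <;>
    rcases max_cases (-c) (min x c) with ⟨h1, _⟩ | ⟨h1, _⟩ <;>
    rcases min_cases x c with ⟨h2, _⟩ | ⟨h2, _⟩ <;> linarith

lemma trim_of_abs_le {c x : ℝ} (h : |x| ≤ c) : trim c x = x := by
  unfold trim
  rw [abs_le] at h
  rw [min_eq_left h.2, max_eq_right h.1]

lemma measurable_trim (c : ℝ) : Measurable (trim c) := by
  unfold trim
  fun_prop

lemma trim_error_pow_four_le {τ τ' : ℝ} (hτ : 0 ≤ τ) (hτ' : 0 ≤ τ') (x y z : ℝ) :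
    (trim τ' (y * (trim τ x + z)) - y * (x + z)) ^ 4 ≤ 64 * (2 * y ^ 8 + x ^ 8 + z ^ 8) := by
  have h1 : |trim τ' (y * (trim τ x + z))| ≤ |y| * (|x| + |z|) := by
    refine (abs_trim_le_abs hτ' _).trans ?_
    rw [abs_mul]
    gcongr
    exact (abs_add_le _ _).trans (add_le_add_left (abs_trim_le_abs hτ x) _)
  have h2 : |y * (x + z)| ≤ |y| * (|x| + |z|) := by
    rw [abs_mul]
    gcongr
    exact abs_add_le _ _
  have h3 : |trim τ' (y * (trim τ x + z)) - y * (x + z)| ≤ 2 * (|y| * (|x| + |z|)) :=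
    (abs_sub _ _).trans (by linarith)
  have h4 := pow_le_pow_left₀ (abs_nonneg _) h3 4
  have e4 : Even 4 := by decide
  rw [e4.pow_abs, mul_pow, mul_pow, e4.pow_abs] at h4
  have h5 : (|x| + |z|) ^ 4 ≤ 8 * (x ^ 4 + z ^ 4) := by
    rw [← e4.pow_abs x, ← e4.pow_abs z]
    have := add_pow_le (abs_nonneg x) (abs_nonneg z) 4
    norm_num at this ⊢
    linarith
  have h6 : y ^ 4 * (|x| + |z|) ^ 4 ≤ y ^ 4 * (8 * (x ^ 4 + z ^ 4)) := by gcongr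
  nlinarith [sq_nonneg (y ^ 4 - x ^ 4), sq_nonneg (y ^ 4 - z ^ 4)]

/-- Pointwise control of the squared trimming error by moments and exponentials. -/
lemma trim_error_sq_le {τ τ' t lam β η : ℝ} (hτ : 0 ≤ τ) (ht : 0 ≤ t) (hτ' : τ * (τ + t) ≤ τ')
    (hlam : 0 ≤ lam) (hβ : 0 < β) (hη : 0 < η) (x y z : ℝ) :
    (trim τ' (y * (trim τ x + z)) - y * (x + z)) ^ 2 ≤
      32 * η * (2 * y ^ 8 + x ^ 8 + z ^ 8) + 1 / (2 * η) *
        (rexp (-lam * τ) * ((rexp (lam * x) + rexp (-lam * x)) +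
          (rexp (lam * y) + rexp (-lam * y))) + rexp (-t / β) * rexp (|z| / β)) := by
  have hτ'0 : 0 ≤ τ' := le_trans (by positivity) hτ'
  set D := trim τ' (y * (trim τ x + z)) - y * (x + z) with hD
  have hD4 : D ^ 4 ≤ 64 * (2 * y ^ 8 + x ^ 8 + z ^ 8) := trim_error_pow_four_le hτ hτ'0 x y z
  have hexp : ∀ u : ℝ, τ < |u| →
      1 ≤ rexp (-lam * τ) * (rexp (lam * u) + rexp (-lam * u)) := fun u hu => by
    have h1 := exp_abs_le (lam * u)
    rw [abs_mul, abs_of_nonneg hlam, ← neg_mul] at h1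
    calc (1 : ℝ) ≤ rexp (-lam * τ + lam * |u|) := by
          rw [Real.one_le_exp_iff]
          nlinarith
      _ = rexp (-lam * τ) * rexp (lam * |u|) := Real.exp_add _ _
      _ ≤ _ := by gcongr
  set E := rexp (-lam * τ) * ((rexp (lam * x) + rexp (-lam * x)) +
          (rexp (lam * y) + rexp (-lam * y))) + rexp (-t / β) * rexp (|z| / β) with hE
  have hE0 : 0 ≤ E := by positivity
  have hE' : E = rexp (-lam * τ) * (rexp (lam * x) + rexp (-lam * x)) +
      rexp (-lam * τ) * (rexp (lam * y) + rexp (-lam * y)) + rexp (-t / β) * rexp (|z| / β) := by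
    rw [hE]
    ring
  have p1 : 0 ≤ rexp (-lam * τ) * (rexp (lam * x) + rexp (-lam * x)) := by positivity
  have p2 : 0 ≤ rexp (-lam * τ) * (rexp (lam * y) + rexp (-lam * y)) := by positivity
  have p3 : 0 ≤ rexp (-t / β) * rexp (|z| / β) := by positivity
  by_cases hgood : |x| ≤ τ ∧ |y| ≤ τ ∧ |z| ≤ t
  · obtain ⟨hx, hy, hz⟩ := hgood
    have hD0 : D = 0 := by
      rw [hD, trim_of_abs_le hx, trim_of_abs_le, sub_self]
      rw [abs_mul]
      refine le_trans ?_ hτ'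
      gcongr
      exact (abs_add_le _ _).trans (by gcongr)
    rw [hD0, zero_pow two_ne_zero]
    positivity
  · have hE1 : 1 ≤ E := by
      rw [hE']
      by_cases hx : |x| ≤ τ
      · by_cases hy : |y| ≤ τ
        · have hz : t < |z| := by
            by_contra! h
            exact hgood ⟨hx, hy, h⟩
          have : 1 ≤ rexp (-t / β) * rexp (|z| / β) := by
            rw [← Real.exp_add, Real.one_le_exp_iff, neg_div, neg_add_eq_sub, ← sub_div]
            exact div_nonneg (by linarith) hβ.le
          linarith
        · linarith [hexp y (not_le.1 hy)]
      · linarith [hexp x (not_le.1 hx)]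
    have hAM : D ^ 2 ≤ η / 2 * D ^ 4 + 1 / (2 * η) := by
      have h : η / 2 * D ^ 4 + 1 / (2 * η) - D ^ 2 = (η * D ^ 2 - 1) ^ 2 / (2 * η) := by
        field_simp
        ring
      have h' : 0 ≤ (η * D ^ 2 - 1) ^ 2 / (2 * η) := by positivity
      linarith
    have h1 : η / 2 * D ^ 4 ≤ η / 2 * (64 * (2 * y ^ 8 + x ^ 8 + z ^ 8)) := by gcongr
    have h2 : 1 / (2 * η) * 1 ≤ 1 / (2 * η) * E := by gcongr
    linarith

end Trim

section ErrorTerms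

variable {Ω : Type*} [MeasurableSpace Ω] {P : Measure Ω} {n m : ℕ}

lemma sum_sq_comp_le_tsum {σ : ℤ → ℝ} (hs : Summable fun k : ℤ => σ k ^ 2) {e : Fin m → ℤ}
    (he : Function.Injective e) : ∑ k, σ (e k) ^ 2 ≤ ∑' k, σ k ^ 2 := by
  have h := hs.sum_le_tsum (Finset.univ.map ⟨e, he⟩) fun k _ => sq_nonneg (σ k)
  rwa [Finset.sum_map] at h

lemma apply_abs_eq {σ : ℤ → ℝ} (hσ : ∀ k, σ (-k) = σ k) (k : ℤ) : σ |k| = σ k := by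
  rcases abs_choice k with h | h <;> rw [h]
  exact hσ k

/-- Mean squared error of the empirical covariance of a stationary Gaussian sample. -/
lemma integral_empirical_cov_sq_le [IsProbabilityMeasure P] {X : Fin n → Ω → ℝ} {σ : ℤ → ℝ}
    {M₁ : ℝ} (hσ : ∀ k, σ (-k) = σ k) (hS : (toeplitz n σ).PosSemidef)
    (hs : Summable fun k : ℤ => σ k ^ 2) (hM : ∑' k : ℤ, σ k ^ 2 ≤ M₁)
    (hXm : ∀ i, Measurable (X i))
    (hX : ∀ a : Fin n → ℝ, P.map (fun ω => ∑ i, a i * X i ω) =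
      gaussianReal 0 (∑ i, ∑ k, a i * toeplitz n σ i k * a k).toNNReal)
    {j : ℕ} {f g : Fin m → Fin n} (hf : ∀ i, (f i : ℕ) = i + j) (hg : ∀ i, (g i : ℕ) = i) :
    ∫ ω, (∑ i, (X (f i) ω * X (g i) ω - σ j)) ^ 2 ∂P ≤ m * (2 * M₁) := by
  have hentry : ∀ p q : Fin n, toeplitz n σ p q = σ ((p : ℕ) - (q : ℕ) : ℤ) := fun p q =>
    apply_abs_eq hσ _
  have hfg : ∀ i, toeplitz n σ (f i) (g i) = σ j := fun i => by
    rw [hentry, hf, hg]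
    congr 1
    push_cast
    ring
  have h := integral_sum_centered_sq hS hXm hX f g
  simp_rw [hfg] at h
  rw [h]
  have hrow : ∀ i : Fin m, ∑ k, (toeplitz n σ (f i) (f k) * toeplitz n σ (g i) (g k) +
      toeplitz n σ (f i) (g k) * toeplitz n σ (g i) (f k)) ≤ 2 * M₁ := fun i => by
    have hshift : ∀ c : ℤ, ∑ k : Fin m, σ (c - (k : ℕ)) ^ 2 ≤ M₁ := fun c =>
      (sum_sq_comp_le_tsum hs fun k l hkl => by
        simp only [sub_right_inj, Nat.cast_inj] at hkl
        exact Fin.ext hkl).trans hM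
    calc _ ≤ ∑ k : Fin m, (σ ((i : ℕ) - (k : ℕ)) ^ 2 +
          (1 / 2) * (σ ((i : ℕ) + j - (k : ℕ)) ^ 2 + σ ((i : ℕ) - j - (k : ℕ)) ^ 2)) := by
          refine Finset.sum_le_sum fun k _ => ?_
          rw [hentry, hentry, hentry, hentry, hf, hf, hg, hg]
          have e1 : (((i : ℕ) + j : ℕ) : ℤ) - (((k : ℕ) + j : ℕ) : ℤ) = (i : ℕ) - (k : ℕ) := by
            push_cast
            ring
          have e2 : (((i : ℕ) + j : ℕ) : ℤ) - ((k : ℕ) : ℤ) = (i : ℕ) + j - (k : ℕ) := by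
            push_cast
            ring
          have e3 : ((i : ℕ) : ℤ) - (((k : ℕ) + j : ℕ) : ℤ) = (i : ℕ) - j - (k : ℕ) := by
            push_cast
            ring
          rw [e1, e2, e3]
          nlinarith [sq_nonneg (σ ((i : ℕ) + j - (k : ℕ)) - σ ((i : ℕ) - j - (k : ℕ)))]
      _ ≤ 2 * M₁ := by
          rw [Finset.sum_add_distrib, ← Finset.mul_sum, Finset.sum_add_distrib]
          linarith [hshift (i : ℕ), hshift ((i : ℕ) + j), hshift ((i : ℕ) - j)]
  refine (Finset.sum_le_sum fun i _ => hrow i).trans ?_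
  simp

lemma integral_comp_of_map_eq {Y : Ω → ℝ} {ν : Measure ℝ} (hY : Measurable Y)
    (hmap : P.map Y = ν) {g : ℝ → ℝ} (hg : Measurable g) :
    ∫ ω, g (Y ω) ∂P = ∫ x, g x ∂ν := by
  rw [← hmap, integral_map hY.aemeasurable hg.aestronglyMeasurable]

lemma integrable_comp_of_map_eq {Y : Ω → ℝ} {ν : Measure ℝ} (hY : Measurable Y)
    (hmap : P.map Y = ν) {g : ℝ → ℝ} (hg : Integrable g ν) :
    Integrable (fun ω => g (Y ω)) P := by
  rw [← hmap] at hg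
  exact hg.comp_measurable hY

lemma memLp_even_of_map_laplace {Y : Ω → ℝ} {b : ℝ} (hb : 0 < b) (hY : Measurable Y)
    (hmap : P.map Y = laplace 0 b) {k : ℕ} (hk : Even k) (hk0 : k ≠ 0) : MemLp Y k P := by
  have h := integrable_comp_of_map_eq hY hmap (integrable_pow_laplace hb k hk)
  refine (integrable_norm_rpow_iff hY.aestronglyMeasurable (by simpa) (by simp)).1 (h.congr ?_)
  refine Filter.Eventually.of_forall fun ω => ?_
  simp [hk.pow_abs]

/-- The second moment of a sum of orthogonal square integrable variables. -/
lemma integral_sum_sq_le_of_orthogonal {Y : Fin m → Ω → ℝ} {v : ℝ} (hY : ∀ i, MemLp (Y i) 2 P)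
    (horth : ∀ i k, i ≠ k → ∫ ω, Y i ω * Y k ω ∂P = 0)
    (hv : ∀ i, ∫ ω, Y i ω * Y i ω ∂P ≤ v) :
    ∫ ω, (∑ i, Y i ω) ^ 2 ∂P ≤ m * v := by
  rw [integral_sum_sq hY]
  refine (Finset.sum_le_sum (g := fun _ => v) fun i _ => ?_).trans (by simp)
  rw [Finset.sum_eq_single i (fun k _ hk => horth i k hk.symm) (by simp)]
  exact hv i

section Noise

variable {ξ : Fin n → Ω → ℝ} {b : ℝ}

lemma integral_laplace_mul_self_le (hb : 0 < b) {Y : Ω → ℝ} (hY : Measurable Y)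
    (hmap : P.map Y = laplace 0 b) : ∫ ω, Y ω * Y ω ∂P ≤ 16 * b ^ 2 := by
  have h := integral_comp_of_map_eq hY hmap (g := fun x => x ^ 2) (by fun_prop)
  simp_rw [← sq]
  rw [h]
  refine (integral_pow_laplace_le hb 2 (by decide)).trans ?_
  norm_num [Nat.factorial]
  linarith

lemma integral_laplace_mul_eq_zero (hb : 0 < b) (hξm : ∀ i, Measurable (ξ i))
    (hξ : ∀ i, P.map (ξ i) = laplace 0 b) (hind : ∀ i k, i ≠ k → IndepFun (ξ i) (ξ k) P)
    {i k : Fin n} (hik : i ≠ k) : ∫ ω, ξ i ω * ξ k ω ∂P = 0 := by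
  rw [(hind i k hik).integral_fun_mul_eq_mul_integral (hξm i).aestronglyMeasurable
    (hξm k).aestronglyMeasurable,
    integral_comp_of_map_eq (hξm i) (hξ i) (g := fun x => x) measurable_id,
    integral_id_laplace hb, zero_mul]

lemma integral_sum_noise_sq_le (hb : 0 < b) (hξm : ∀ i, Measurable (ξ i))
    (hξ : ∀ i, P.map (ξ i) = laplace 0 b) (hind : ∀ i k, i ≠ k → IndepFun (ξ i) (ξ k) P)
    {f : Fin m → Fin n} (hf : Function.Injective f) :
    ∫ ω, (∑ i, ξ (f i) ω) ^ 2 ∂P ≤ m * (16 * b ^ 2) :=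
  integral_sum_sq_le_of_orthogonal
    (fun _ => memLp_even_of_map_laplace hb (hξm _) (hξ _) (k := 2) (by decide) (by simp))
    (fun _ _ hik => integral_laplace_mul_eq_zero hb hξm hξ hind (hf.ne hik))
    (fun _ => integral_laplace_mul_self_le hb (hξm _) (hξ _))

lemma integral_sum_mul_noise_sq_le {X : Fin n → Ω → ℝ} {S : Matrix (Fin n) (Fin n) ℝ} {s : ℝ}
    (hS : S.PosSemidef) (hSs : ∀ i, S i i ≤ s) (hXm : ∀ i, Measurable (X i))
    (hX : ∀ a : Fin n → ℝ, P.map (fun ω => ∑ i, a i * X i ω) =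
      gaussianReal 0 (∑ i, ∑ k, a i * S i k * a k).toNNReal)
    (hb : 0 < b) (hξm : ∀ i, Measurable (ξ i))
    (hξ : ∀ i, P.map (ξ i) = laplace 0 b) (hind : ∀ i k, i ≠ k → IndepFun (ξ i) (ξ k) P)
    (hXξ : IndepFun (fun ω i => X i ω) (fun ω i => ξ i ω) P)
    (f : Fin m → Fin n) {g : Fin m → Fin n} (hg : Function.Injective g) :
    ∫ ω, (∑ i, X (f i) ω * ξ (g i) ω) ^ 2 ∂P ≤ m * (s * (16 * b ^ 2)) := by
  have hsplit : ∀ i k, ∫ ω, X (f i) ω * ξ (g i) ω * (X (f k) ω * ξ (g k) ω) ∂P =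
      S (f i) (f k) * ∫ ω, ξ (g i) ω * ξ (g k) ω ∂P := fun i k => by
    have h := hXξ.comp (φ := fun x => x (f i) * x (f k)) (ψ := fun x => x (g i) * x (g k))
      (by fun_prop) (by fun_prop)
    have h' := h.integral_fun_mul_eq_mul_integral
      (((hXm (f i)).mul (hXm (f k))).aestronglyMeasurable)
      (((hξm (g i)).mul (hξm (g k))).aestronglyMeasurable)
    simp only [Function.comp_apply] at h'
    rw [← integral_mul_eq_cov hS hXm hX]
    refine (integral_congr_ae (Filter.Eventually.of_forall fun ω => ?_)).trans h'
    ring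
  refine integral_sum_sq_le_of_orthogonal (fun i => ?_) (fun i k hik => ?_) (fun i => ?_)
  · exact memLp_two_mul_of_memLp_four (memLp_coord hXm hX _ 4 (by simp))
      (memLp_even_of_map_laplace hb (hξm _) (hξ _) (k := 4) (by decide) (by simp))
  · rw [hsplit, integral_laplace_mul_eq_zero hb hξm hξ hind (hg.ne hik), mul_zero]
  · rw [hsplit]
    have h0 : 0 ≤ S (f i) (f i) := hS.diag_nonneg
    exact mul_le_mul (hSs _) (integral_laplace_mul_self_le hb (hξm _) (hξ _))
      (integral_nonneg fun ω => mul_self_nonneg _) (h0.trans (hSs _))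

end Noise

lemma integrable_exp_of_map_gaussian {Y : Ω → ℝ} {v : NNReal} (hY : Measurable Y)
    (hmap : P.map Y = gaussianReal 0 v) (t : ℝ) : Integrable (fun ω => rexp (t * Y ω)) P :=
  integrable_comp_of_map_eq hY hmap (integrable_exp_mul_gaussianReal t)

lemma integral_exp_of_map_gaussian_le {Y : Ω → ℝ} {v : NNReal} {s : ℝ} (hv : (v : ℝ) ≤ s)
    (hmap : P.map Y = gaussianReal 0 v) (t : ℝ) :
    ∫ ω, rexp (t * Y ω) ∂P ≤ rexp (s * t ^ 2 / 2) := by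
  have h := mgf_gaussianReal hmap t
  rw [mgf] at h
  rw [h, zero_mul, zero_add]
  gcongr

lemma integrable_pow_eight_of_map_gaussian {Y : Ω → ℝ} {v : NNReal}
    (hY : Measurable Y) (hmap : P.map Y = gaussianReal 0 v) :
    Integrable (fun ω => Y ω ^ 8) P := by
  have h := memLp_id_gaussianReal' (μ := 0) (v := v) 8 (by simp)
  rw [← hmap] at h
  have h' := (h.comp_of_map hY.aemeasurable).integrable_norm_rpow (by simp) (by simp)
  refine h'.congr (Filter.Eventually.of_forall fun ω => ?_)
  have e8 : Even 8 := by decide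
  simp [e8.pow_abs]

lemma integral_pow_eight_of_map_gaussian_le {Y : Ω → ℝ} {v : NNReal} {s : ℝ} (hv : (v : ℝ) ≤ s)
    (hY : Measurable Y) (hmap : P.map Y = gaussianReal 0 v) :
    ∫ ω, Y ω ^ 8 ∂P ≤ (Nat.factorial 8 : ℝ) * (2 * rexp (s / 2)) := by
  have i1 := integrable_exp_of_map_gaussian hY hmap 1
  have i2 := integrable_exp_of_map_gaussian hY hmap (-1)
  have h1 := integral_exp_of_map_gaussian_le hv hmap 1
  have h2 := integral_exp_of_map_gaussian_le hv hmap (-1)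
  calc ∫ ω, Y ω ^ 8 ∂P
      ≤ ∫ ω, (Nat.factorial 8 : ℝ) * (rexp (1 * Y ω) + rexp (-1 * Y ω)) ∂P := by
        refine integral_mono (integrable_pow_eight_of_map_gaussian hY hmap)
          ((i1.add i2).const_mul _) fun ω => ?_
        refine (pow_le_factorial_mul_exp_abs 8 (by decide) (Y ω)).trans ?_
        rw [one_mul, neg_one_mul]
        gcongr
        exact Real.exp_abs_le _
    _ ≤ _ := by
        rw [integral_const_mul, integral_add i1 i2]
        norm_num at h1 h2 ⊢
        linarith

/-- Mean squared trimming error of one summand of the estimator. -/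
lemma integral_trim_error_sq_le {X Y ξ : Ω → ℝ} {v : NNReal} {s b τ τ' t η : ℝ}
    (hv : (v : ℝ) ≤ s) (hs : 0 < s) (hXm : Measurable X) (hX : P.map X = gaussianReal 0 v)
    (hYm : Measurable Y) (hY : P.map Y = gaussianReal 0 v) (hb : 0 < b) (hξm : Measurable ξ)
    (hξ : P.map ξ = laplace 0 b) (hτ : 0 ≤ τ) (ht : 0 ≤ t) (hτ' : τ * (τ + t) ≤ τ')
    (hη : 0 < η) :
    Integrable (fun ω => (trim τ' (Y ω * (trim τ (X ω) + ξ ω)) - Y ω * (X ω + ξ ω)) ^ 2) P ∧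
    ∫ ω, (trim τ' (Y ω * (trim τ (X ω) + ξ ω)) - Y ω * (X ω + ξ ω)) ^ 2 ∂P ≤
      32 * η * (3 * ((Nat.factorial 8 : ℝ) * (2 * rexp (s / 2))) +
        2 * ((Nat.factorial 8 : ℝ) * (2 * b) ^ 8)) +
      1 / (2 * η) * (4 * rexp (-τ ^ 2 / (2 * s)) + 2 * rexp (-t / (2 * b))) := by
  have hpt := fun ω => trim_error_sq_le (β := 2 * b) hτ ht hτ' (div_nonneg hτ hs.le)
    (by positivity) hη (X ω) (Y ω) (ξ ω)
  set lam := τ / s with hlam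
  have iX := integrable_pow_eight_of_map_gaussian hXm hX
  have iY := integrable_pow_eight_of_map_gaussian hYm hY
  have iξ := integrable_comp_of_map_eq hξm hξ (integrable_pow_laplace hb 8 (by decide))
  have eX := integrable_exp_of_map_gaussian hXm hX
  have eY := integrable_exp_of_map_gaussian hYm hY
  have eξ := integrable_comp_of_map_eq hξm hξ (integrable_exp_abs_laplace hb)
  have i8 : Integrable (fun ω => 2 * Y ω ^ 8 + X ω ^ 8 + ξ ω ^ 8) P :=
    ((iY.const_mul 2).add iX).add iξ
  have ie : Integrable (fun ω => (rexp (lam * X ω) + rexp (-lam * X ω)) +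
      (rexp (lam * Y ω) + rexp (-lam * Y ω))) P :=
    ((eX lam).add (eX (-lam))).add ((eY lam).add (eY (-lam)))
  have iE : Integrable (fun ω => rexp (-lam * τ) * ((rexp (lam * X ω) + rexp (-lam * X ω)) +
      (rexp (lam * Y ω) + rexp (-lam * Y ω))) + rexp (-t / (2 * b)) * rexp (|ξ ω| / (2 * b))) P :=
    (ie.const_mul _).add (eξ.const_mul _)
  have iB := (i8.const_mul (32 * η)).fun_add (iE.const_mul (1 / (2 * η)))
  have hmeas : Measurable
      (fun ω => (trim τ' (Y ω * (trim τ (X ω) + ξ ω)) - Y ω * (X ω + ξ ω)) ^ 2) :=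
    (((measurable_trim τ').comp (hYm.mul (((measurable_trim τ).comp hXm).add hξm))).sub
      (hYm.mul (hXm.add hξm))).pow_const 2
  have hInt := iB.mono' hmeas.aestronglyMeasurable (Filter.Eventually.of_forall fun ω => by
    rw [Real.norm_of_nonneg (sq_nonneg _)]
    exact hpt ω)
  refine ⟨hInt, (integral_mono hInt iB hpt).trans ?_⟩
  rw [integral_add (i8.const_mul _) (iE.const_mul _), integral_const_mul, integral_const_mul,
    integral_add (ie.const_mul _) (eξ.const_mul _), integral_const_mul, integral_const_mul,
    integral_add ((eX lam).fun_add (eX (-lam))) ((eY lam).fun_add (eY (-lam))),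
    integral_add (eX lam) (eX (-lam)), integral_add (eY lam) (eY (-lam)),
    integral_add ((iY.const_mul 2).fun_add iX) iξ, integral_add (iY.const_mul 2) iX,
    integral_const_mul]
  have mX := integral_pow_eight_of_map_gaussian_le hv hXm hX
  have mY := integral_pow_eight_of_map_gaussian_le hv hYm hY
  have mξ : ∫ ω, ξ ω ^ 8 ∂P ≤ 2 * ((Nat.factorial 8 : ℝ) * (2 * b) ^ 8) := by
    rw [integral_comp_of_map_eq hξm hξ (g := fun x => x ^ 8) (by fun_prop)]
    exact integral_pow_laplace_le hb 8 (by decide)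
  have mξe : ∫ ω, rexp (|ξ ω| / (2 * b)) ∂P = 2 := by
    rw [integral_comp_of_map_eq hξm hξ (g := fun x => rexp (|x| / (2 * b))) (by fun_prop)]
    exact integral_exp_abs_laplace hb
  have a1 := integral_exp_of_map_gaussian_le hv hX lam
  have a2 := integral_exp_of_map_gaussian_le hv hX (-lam)
  have a3 := integral_exp_of_map_gaussian_le hv hY lam
  have a4 := integral_exp_of_map_gaussian_le hv hY (-lam)
  rw [neg_sq] at a2 a4
  have hprod : rexp (-lam * τ) * rexp (s * lam ^ 2 / 2) = rexp (-τ ^ 2 / (2 * s)) := by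
    rw [← Real.exp_add, hlam]
    congr 1
    field_simp
    ring
  rw [mξe]
  refine add_le_add ?_ ?_
  · gcongr
    linarith
  · have hE : rexp (-lam * τ) * (∫ ω, rexp (lam * X ω) ∂P + ∫ ω, rexp (-lam * X ω) ∂P +
        (∫ ω, rexp (lam * Y ω) ∂P + ∫ ω, rexp (-lam * Y ω) ∂P)) ≤
        4 * rexp (-τ ^ 2 / (2 * s)) := by
      calc _ ≤ rexp (-lam * τ) * (4 * rexp (s * lam ^ 2 / 2)) := by
            refine mul_le_mul_of_nonneg_left ?_ (exp_pos _).le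
            linarith
        _ = 4 * (rexp (-lam * τ) * rexp (s * lam ^ 2 / 2)) := by ring
        _ = _ := by rw [hprod]
    refine mul_le_mul_of_nonneg_left ?_ (by positivity)
    linarith

end ErrorTerms

/-- Combination of the four error terms of the estimator. -/
lemma lintegral_sq_le_of_error_terms {Ω : Type*} [MeasurableSpace Ω] {P : Measure Ω} {m : ℕ}
    (hm : 0 < m) {A B C : Ω → ℝ} {D : Fin m → Ω → ℝ} {a b c d : ℝ} (hA : MemLp A 2 P)
    (hB : MemLp B 2 P) (hC : MemLp C 2 P) (hD : ∀ i, Integrable (fun ω => D i ω ^ 2) P)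
    (hAa : ∫ ω, A ω ^ 2 ∂P ≤ m * a) (hBb : ∫ ω, B ω ^ 2 ∂P ≤ m * b)
    (hCc : ∫ ω, C ω ^ 2 ∂P ≤ m * c) (hDd : ∀ i, ∫ ω, D i ω ^ 2 ∂P ≤ d) :
    ∫⁻ ω, ENNReal.ofReal (((m : ℝ)⁻¹ * (A ω + B ω + C ω + ∑ i, D i ω)) ^ 2) ∂P ≤
      ENNReal.ofReal (4 / m * (a + b + c) + 4 * d) := by
  have hm' : (0 : ℝ) < m := by exact_mod_cast hm
  have iD : Integrable (fun ω => (m : ℝ) * ∑ i, D i ω ^ 2) P :=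
    (integrable_finsetSum _ fun i _ => hD i).const_mul _
  have iAB := hA.integrable_sq.fun_add hB.integrable_sq
  have iABC := iAB.fun_add hC.integrable_sq
  have iH := (iABC.fun_add iD).const_mul (4 * ((m : ℝ)⁻¹) ^ 2)
  calc _ ≤ ∫⁻ ω, ENNReal.ofReal (4 * ((m : ℝ)⁻¹) ^ 2 *
          (A ω ^ 2 + B ω ^ 2 + C ω ^ 2 + m * ∑ i, D i ω ^ 2)) ∂P := by
        refine lintegral_mono fun ω => ENNReal.ofReal_le_ofReal ?_
        have hcs : (∑ i, D i ω) ^ 2 ≤ m * ∑ i, D i ω ^ 2 := by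
          simpa using sq_sum_le_card_mul_sum_sq (s := Finset.univ) (f := fun i => D i ω)
        have h4 : (A ω + B ω + C ω + ∑ i, D i ω) ^ 2 ≤
            4 * (A ω ^ 2 + B ω ^ 2 + C ω ^ 2 + (∑ i, D i ω) ^ 2) := by
          nlinarith [sq_nonneg (A ω - B ω), sq_nonneg (A ω - C ω), sq_nonneg (B ω - C ω),
            sq_nonneg (A ω - ∑ i, D i ω), sq_nonneg (B ω - ∑ i, D i ω),
            sq_nonneg (C ω - ∑ i, D i ω)]
        calc _ = ((m : ℝ)⁻¹) ^ 2 * (A ω + B ω + C ω + ∑ i, D i ω) ^ 2 := by ring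
          _ ≤ ((m : ℝ)⁻¹) ^ 2 * (4 * (A ω ^ 2 + B ω ^ 2 + C ω ^ 2 + m * ∑ i, D i ω ^ 2)) := by
              gcongr
              linarith
          _ = _ := by ring
    _ = ENNReal.ofReal (∫ ω, 4 * ((m : ℝ)⁻¹) ^ 2 *
          (A ω ^ 2 + B ω ^ 2 + C ω ^ 2 + m * ∑ i, D i ω ^ 2) ∂P) := by
        rw [ofReal_integral_eq_lintegral_ofReal iH]
        refine Filter.Eventually.of_forall fun ω => ?_
        have := Finset.sum_nonneg fun i (_ : i ∈ Finset.univ) => sq_nonneg (D i ω)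
        positivity
    _ ≤ _ := by
        refine ENNReal.ofReal_le_ofReal ?_
        rw [integral_const_mul, integral_add iABC iD, integral_add iAB hC.integrable_sq,
          integral_add hA.integrable_sq hB.integrable_sq, integral_const_mul,
          integral_finsetSum _ fun i _ => hD i]
        have hsum : ∑ i, ∫ ω, D i ω ^ 2 ∂P ≤ m * d := by
          refine (Finset.sum_le_sum fun i _ => hDd i).trans ?_
          simp
        calc _ ≤ 4 * ((m : ℝ)⁻¹) ^ 2 * (m * a + m * b + m * c + m * (m * d)) := by gcongr
          _ = _ := by
            field_simp

section Asymptotics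

lemma eventually_mul_log_le {δ : ℝ} (hδ : 0 < δ) (C : ℝ) :
    ∀ᶠ n : ℕ in Filter.atTop, C * Real.log n ≤ Real.log n ^ (1 + δ) := by
  have hlog : Filter.Tendsto (fun n : ℕ => Real.log n) Filter.atTop Filter.atTop :=
    tendsto_log_atTop.comp tendsto_natCast_atTop_atTop
  filter_upwards [((tendsto_rpow_atTop hδ).comp hlog).eventually_ge_atTop C,
    hlog.eventually_gt_atTop 0] with n hn hpos
  rw [rpow_add hpos, rpow_one, mul_comm]
  exact mul_le_mul_of_nonneg_left hn hpos.le

lemma eventually_add_mul_log_rpow_le (δ C C' : ℝ) :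
    ∀ᶠ n : ℕ in Filter.atTop, C + C' * (Real.log n ^ (1 + δ)) ^ 4 ≤ n := by
  have h1 := ((isLittleO_log_rpow_rpow_atTop ((1 + δ) * 4) one_pos).comp_tendsto
    tendsto_natCast_atTop_atTop).const_mul_left C'
  have h2 : (fun _ : ℝ => C) =o[Filter.atTop] (fun x : ℝ => x ^ (1 : ℝ)) := by
    simp only [rpow_one]
    exact Asymptotics.isLittleO_const_id_atTop C
  have h := ((h2.comp_tendsto tendsto_natCast_atTop_atTop).add h1).def one_pos
  filter_upwards [h, Filter.eventually_ge_atTop 1] with n hn hn1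
  have hlog : 0 ≤ Real.log n := Real.log_nonneg (by exact_mod_cast hn1)
  simp only [Function.comp_apply, rpow_one, one_mul, Real.norm_eq_abs, Nat.abs_cast] at hn
  rw [rpow_mul hlog] at hn
  have e : (Real.log n ^ (1 + δ)) ^ (4 : ℝ) = (Real.log n ^ (1 + δ)) ^ (4 : ℕ) := by
    exact_mod_cast rpow_natCast (Real.log n ^ (1 + δ)) 4
  rw [e] at hn
  exact (le_abs_self _).trans hn

end Asymptotics

lemma trim_error_bound_le {n s α L K K' b τ : ℝ} (hn : 6 ≤ n) (hs : 0 < s) (hα : 0 < α)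
    (hτ : 0 < τ) (hτ2 : τ ^ 2 = 8 * L) (hb : b = 4 * τ / α)
    (h1 : s * Real.log n ≤ L) (h2 : 32 / (15 * α) * Real.log n ≤ L)
    (h3 : 64 * (K + K' * (2 * 4 / α) ^ 8 * 8 ^ 4 * L ^ 4) ≤ n) :
    32 * (1 / n ^ 2) * (K + K' * (2 * b) ^ 8) + 1 / (2 * (1 / n ^ 2)) *
      (4 * rexp (-τ ^ 2 / (2 * s)) + 2 * rexp (-(15 * L * τ) / (2 * b))) ≤ 1 / n := by
  have hn0 : 0 < n := by linarith
  have hexp : rexp (-4 * Real.log n) = 1 / n ^ 4 := by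
    rw [show -4 * Real.log n = Real.log n * (-4 : ℝ) by ring, ← rpow_def_of_pos hn0,
      rpow_neg hn0.le, one_div]
    congr 1
    exact_mod_cast rpow_natCast n 4
  have e1 : rexp (-τ ^ 2 / (2 * s)) ≤ 1 / n ^ 4 := by
    rw [← hexp, hτ2]
    gcongr
    rw [div_le_iff₀ (by positivity)]
    linarith
  have e2 : rexp (-(15 * L * τ) / (2 * b)) ≤ 1 / n ^ 4 := by
    rw [← hexp, hb]
    gcongr
    have : -(15 * L * τ) / (2 * (4 * τ / α)) = -(15 * α / 8) * L := by
      field_simp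
      ring
    rw [this]
    have h := mul_le_mul_of_nonneg_left h2 (by positivity : 0 ≤ 15 * α / 8)
    have h' : 15 * α / 8 * (32 / (15 * α) * Real.log n) = 4 * Real.log n := by
      field_simp
      ring
    linarith
  have e3 : (2 * b) ^ 8 = (2 * 4 / α) ^ 8 * 8 ^ 4 * L ^ 4 := by
    rw [hb, show (2 * (4 * τ / α)) ^ 8 = (2 * 4 / α) ^ 8 * (τ ^ 2) ^ 4 by ring, hτ2]
    ring
  rw [e3]
  have f1 : 32 * (1 / n ^ 2) * (K + K' * ((2 * 4 / α) ^ 8 * 8 ^ 4 * L ^ 4)) ≤ 1 / (2 * n) := by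
    rw [show 32 * (1 / n ^ 2) * (K + K' * ((2 * 4 / α) ^ 8 * 8 ^ 4 * L ^ 4)) =
      (64 * (K + K' * (2 * 4 / α) ^ 8 * 8 ^ 4 * L ^ 4)) / (2 * n ^ 2) by field_simp; ring,
      div_le_div_iff₀ (by positivity) (by positivity)]
    nlinarith
  have f2 : 1 / (2 * (1 / n ^ 2)) *
      (4 * rexp (-τ ^ 2 / (2 * s)) + 2 * rexp (-(15 * L * τ) / (2 * b))) ≤ 1 / (2 * n) := by
    calc _ ≤ 1 / (2 * (1 / n ^ 2)) * (4 * (1 / n ^ 4) + 2 * (1 / n ^ 4)) := by gcongr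
      _ = 3 / n ^ 2 := by
        field_simp
        ring
      _ ≤ _ := by
        rw [div_le_div_iff₀ (by positivity) (by positivity)]
        nlinarith
  have f3 : 1 / (2 * n) + 1 / (2 * n) = 1 / n := by
    field_simp
    ring
  linarith

lemma indepFun_comp_measurePreserving {Ω Ω' : Type*} [MeasurableSpace Ω] [MeasurableSpace Ω']
    {P : Measure Ω} {Q : Measure Ω'} {φ : Ω → Ω'} (hφ : MeasurePreserving φ P Q) {f g : Ω' → ℝ}
    (hf : Measurable f) (hg : Measurable g) (h : IndepFun f g Q) :
    IndepFun (fun ω => f (φ ω)) (fun ω => g (φ ω)) P := by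
  rw [indepFun_iff_measure_inter_preimage_eq_mul] at h ⊢
  intro s t hs ht
  have hfs := hf hs
  have hgt := hg ht
  have h' := h s t hs ht
  rw [← hφ.measure_preimage (hfs.inter hgt).nullMeasurableSet,
    ← hφ.measure_preimage hfs.nullMeasurableSet,
    ← hφ.measure_preimage hgt.nullMeasurableSet] at h'
  exact h'

/-- Mean squared error of the estimator, up to the trimming error `d` of one summand. -/
lemma lintegral_estimator_error_le {Ω : Type*} [MeasurableSpace Ω] {P : Measure Ω}
    [IsProbabilityMeasure P] {n m : ℕ} (hm : 0 < m) {X ξ ζ : Fin n → Ω → ℝ} {σ : ℤ → ℝ}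
    {M₁ s b b' τ τ' t η d : ℝ} (hσ : ∀ k, σ (-k) = σ k) (hS : (toeplitz n σ).PosSemidef)
    (hsum : Summable fun k : ℤ => σ k ^ 2) (hM : ∑' k : ℤ, σ k ^ 2 ≤ M₁)
    (hs : 0 < s) (hσs : σ 0 ≤ s) (hXm : ∀ i, Measurable (X i))
    (hX : ∀ a : Fin n → ℝ, P.map (fun ω => ∑ i, a i * X i ω) =
      gaussianReal 0 (∑ i, ∑ k, a i * toeplitz n σ i k * a k).toNNReal)
    (hb : 0 < b) (hξm : ∀ i, Measurable (ξ i)) (hξ : ∀ i, P.map (ξ i) = laplace 0 b)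
    (hξind : ∀ i k, i ≠ k → IndepFun (ξ i) (ξ k) P)
    (hb' : 0 < b') (hζm : ∀ i, Measurable (ζ i)) (hζ : ∀ i, P.map (ζ i) = laplace 0 b')
    (hζind : ∀ i k, i ≠ k → IndepFun (ζ i) (ζ k) P)
    (hXξ : IndepFun (fun ω i => X i ω) (fun ω i => ξ i ω) P)
    (hτ : 0 ≤ τ) (ht : 0 ≤ t) (hτ' : τ * (τ + t) ≤ τ') (hη : 0 < η)
    (hd : 32 * η * (3 * ((Nat.factorial 8 : ℝ) * (2 * rexp (s / 2))) +
        2 * ((Nat.factorial 8 : ℝ) * (2 * b) ^ 8)) +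
      1 / (2 * η) * (4 * rexp (-τ ^ 2 / (2 * s)) + 2 * rexp (-t / (2 * b))) ≤ d)
    {j : ℕ} {f g : Fin m → Fin n} (hf : ∀ i, (f i : ℕ) = i + j) (hg : ∀ i, (g i : ℕ) = i) :
    ∫⁻ ω, ENNReal.ofReal (((m : ℝ)⁻¹ *
        ∑ i, (trim τ' (X (f i) ω * (trim τ (X (g i) ω) + ξ (g i) ω)) + ζ (f i) ω) - σ j) ^ 2) ∂P ≤
      ENNReal.ofReal (4 / m * (2 * M₁ + s * (16 * b ^ 2) + 16 * b' ^ 2) + 4 * d) := by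
  have hm' : (m : ℝ) ≠ 0 := by exact_mod_cast hm.ne'
  have hfinj : Function.Injective f := fun i k h => by
    have := congrArg Fin.val h
    rw [hf, hf] at this
    exact Fin.ext (by omega)
  have hginj : Function.Injective g := fun i k h => by
    have := congrArg Fin.val h
    rw [hg, hg] at this
    exact Fin.ext this
  have hdiag : ∀ i, toeplitz n σ i i = σ 0 := fun i => by simp [toeplitz]
  have hlaw : ∀ i, P.map (X i) = gaussianReal 0 (σ 0).toNNReal := fun i => by
    rw [map_coord_eq hX i, hdiag]
  have hσ0 : ((σ 0).toNNReal : ℝ) ≤ s := by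
    rw [coe_toNNReal']
    exact max_le hσs hs.le
  have hD := fun i => integral_trim_error_sq_le hσ0 hs (hXm (g i)) (hlaw (g i)) (hXm (f i))
    (hlaw (f i)) hb (hξm (g i)) (hξ (g i)) hτ ht hτ' hη
  have hX4 := fun i => memLp_coord hXm hX i 4 (by simp)
  have hξ4 : ∀ i, MemLp (ξ i) 4 P := fun i =>
    memLp_even_of_map_laplace hb (hξm i) (hξ i) (k := 4) (by decide) (by simp)
  have hζ2 : ∀ i, MemLp (ζ i) 2 P := fun i =>
    memLp_even_of_map_laplace hb' (hζm i) (hζ i) (k := 2) (by decide) (by simp)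
  have key := lintegral_sq_le_of_error_terms hm
    (A := fun ω => ∑ i, (X (f i) ω * X (g i) ω - σ j))
    (B := fun ω => ∑ i, X (f i) ω * ξ (g i) ω) (C := fun ω => ∑ i, ζ (f i) ω)
    (memLp_finsetSum _ fun i _ =>
      (memLp_two_mul_of_memLp_four (hX4 (f i)) (hX4 (g i))).sub (memLp_const (σ j)))
    (memLp_finsetSum _ fun i _ => memLp_two_mul_of_memLp_four (hX4 (f i)) (hξ4 (g i)))
    (memLp_finsetSum _ fun i _ => hζ2 (f i)) (fun i => (hD i).1)
    (integral_empirical_cov_sq_le hσ hS hsum hM hXm hX hf hg)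
    (integral_sum_mul_noise_sq_le hS (fun i => (hdiag i).trans_le hσs) hXm hX hb hξm hξ hξind
      hXξ f hginj)
    (integral_sum_noise_sq_le hb' hζm hζ hζind hfinj) (fun i => (hD i).2.trans hd)
  refine le_of_eq_of_le (lintegral_congr fun ω => ?_) key
  congr 2
  simp only [← Finset.sum_add_distrib]
  have hconst : σ j = (m : ℝ)⁻¹ * ∑ _i : Fin m, σ j := by
    simp [hm']
  conv_lhs => rw [hconst]
  rw [← mul_sub, ← Finset.sum_sub_distrib]
  congr 1
  refine Finset.sum_congr rfl fun i _ => ?_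
  ring

/-- Rate of convergence of the interactive private estimator of a covariance
coefficient: the mean squared error is at most `c · max{1/n, log^{4+4δ}(n)/(nα²)}`. -/
theorem interactive_covariance_rate
    (δ M₁ : ℝ) (hδ : 0 < δ) (hM₁ : 0 < M₁)
    (R : ℕ → ℕ) (hR : ∀ n, 2 ≤ n → 0 < R n ∧ R n < n)
    (hRlim : Filter.Tendsto (fun n => (R n : ℝ) / n) Filter.atTop (nhds 0)) :
    ∃ c : ℝ, 0 < c ∧
      ∀ α : ℝ, α ∈ Set.Ioo (0 : ℝ) 1 →
        ∃ N : ℕ, ∀ n : ℕ, N ≤ n →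
          ∀ σ : ℤ → ℝ, (∀ k, σ (-k) = σ k) → (toeplitz n σ).PosSemidef →
            Summable (fun k : ℤ => σ k ^ 2) → (∑' k : ℤ, σ k ^ 2) ≤ M₁ →
          ∀ μX : Measure (Fin n → ℝ), IsProbabilityMeasure μX →
            IsCenteredGaussian μX (toeplitz n σ) →
          ∀ j : ℕ, 1 ≤ j → j ≤ R n →
            (∫⁻ w : (Fin n → ℝ) × (Fin n → ℝ) × (Fin n → ℝ),
                ENNReal.ofReal
                  ((sigmaHat n j (Real.sqrt (8 * Real.log n ^ (1 + δ)))
                      (16 * Real.log n ^ (1 + δ) * Real.sqrt (8 * Real.log n ^ (1 + δ)) ^ 2) w -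
                    σ (j : ℤ)) ^ 2)
              ∂(μX.prod
                  ((Measure.pi fun _ : Fin n =>
                      laplace 0 (4 * Real.sqrt (8 * Real.log n ^ (1 + δ)) / α)).prod
                    (Measure.pi fun _ : Fin n =>
                      laplace 0
                        (4 * (16 * Real.log n ^ (1 + δ) *
                          Real.sqrt (8 * Real.log n ^ (1 + δ)) ^ 2) / α))))) ≤
              ENNReal.ofReal
                (c * max (1 / (n : ℝ)) (Real.log n ^ (4 + 4 * δ) / (n * α ^ 2))) := by
  refine ⟨16 * M₁ + 8 * 2048 * √M₁ + 8 * 256 * 16384 + 4, by positivity, fun α hα => ?_⟩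
  obtain ⟨hα0, hα1⟩ := hα
  have hs : 0 < √M₁ := Real.sqrt_pos.2 hM₁
  have hlogT : Filter.Tendsto (fun n : ℕ => Real.log n) Filter.atTop Filter.atTop :=
    tendsto_log_atTop.comp tendsto_natCast_atTop_atTop
  obtain ⟨N, hN⟩ := Filter.eventually_atTop.1
    ((Filter.eventually_ge_atTop 6).and <| (hlogT.eventually_ge_atTop 1).and <|
      (hRlim.eventually_le_const (by norm_num : (0 : ℝ) < 1 / 2)).and <|
      (eventually_mul_log_le hδ (√M₁)).and <|
      (eventually_mul_log_le hδ (32 / (15 * α))).and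
      (eventually_add_mul_log_rpow_le δ
        (64 * (3 * ((Nat.factorial 8 : ℝ) * (2 * rexp (√M₁ / 2)))))
        (64 * (2 * (Nat.factorial 8 : ℝ) * (2 * 4 / α) ^ 8 * 8 ^ 4))))
  refine ⟨N, fun n hn σ hσ hS hsum hM μX hμX hX j _ hj => ?_⟩
  obtain ⟨hn6, hlog1, hRn, hL1, hL2, hL3⟩ := hN n hn
  have hn6' : (6 : ℝ) ≤ n := by exact_mod_cast hn6
  have hn0 : (0 : ℝ) < n := by linarith
  have hjn : (j : ℝ) ≤ n / 2 := by
    rw [div_le_iff₀ hn0] at hRn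
    have : (j : ℝ) ≤ R n := by exact_mod_cast hj
    linarith
  have hjn' : j < n := by
    have : (j : ℝ) < n := by linarith
    exact_mod_cast this
  have hLge : 1 ≤ Real.log n ^ (1 + δ) := one_le_rpow hlog1 (by linarith)
  have hL4 : Real.log n ^ (4 + 4 * δ) = (Real.log n ^ (1 + δ)) ^ 4 := by
    rw [← rpow_natCast, ← rpow_mul (by linarith)]
    congr 1
    push_cast
    ring
  rw [hL4]
  set L := Real.log n ^ (1 + δ) with hL
  set τ := √(8 * L) with hτdef
  have hτ : 0 < τ := Real.sqrt_pos.2 (by linarith)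
  have hτ2 : τ ^ 2 = 8 * L := Real.sq_sqrt (by linarith)
  set τ' := 16 * L * τ ^ 2 with hτ'def
  have hτ' : 0 < τ' := by positivity
  have hb : 0 < 4 * τ / α := by positivity
  have hb' : 0 < 4 * τ' / α := by positivity
  have := isProbabilityMeasure_laplace hb
  have := isProbabilityMeasure_laplace hb'
  have hσ0 : σ 0 ≤ √M₁ := by
    refine Real.le_sqrt_of_sq_le (le_trans ?_ hM)
    exact hsum.le_tsum 0 fun k _ => sq_nonneg (σ k)
  set νξ := Measure.pi fun _ : Fin n => laplace 0 (4 * τ / α) with hνξ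
  set νζ := Measure.pi fun _ : Fin n => laplace 0 (4 * τ' / α) with hνζ
  have pX : MeasurePreserving Prod.fst (μX.prod (νξ.prod νζ)) μX := measurePreserving_fst
  have pξ : MeasurePreserving (fun w : (Fin n → ℝ) × (Fin n → ℝ) × (Fin n → ℝ) => w.2.1)
      (μX.prod (νξ.prod νζ)) νξ := measurePreserving_fst.comp measurePreserving_snd
  have pζ : MeasurePreserving (fun w : (Fin n → ℝ) × (Fin n → ℝ) × (Fin n → ℝ) => w.2.2)
      (μX.prod (νξ.prod νζ)) νζ := measurePreserving_snd.comp measurePreserving_snd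
  have hpiind : ∀ (b : ℝ) [IsProbabilityMeasure (laplace 0 b)] (i k : Fin n), i ≠ k →
      IndepFun (fun x : Fin n → ℝ => x i) (fun x => x k) (Measure.pi fun _ => laplace 0 b) :=
    fun b _ i k hik => (iIndepFun_pi (μ := fun _ : Fin n => laplace 0 b) (X := fun _ x => x)
      fun _ => aemeasurable_id).indepFun hik
  have hm : 0 < n - j := by omega
  have hmcast : ((n - j : ℕ) : ℝ) = n - j := Nat.cast_sub hjn'.le
  have key := lintegral_estimator_error_le (P := μX.prod (νξ.prod νζ)) (n := n) (m := n - j) hm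
    (X := fun i w => w.1 i) (ξ := fun i w => w.2.1 i) (ζ := fun i w => w.2.2 i)
    (τ := τ) (τ' := τ') (t := 15 * L * τ) (η := 1 / (n : ℝ) ^ 2) (d := 1 / n)
    hσ hS hsum hM hs hσ0 (fun i => by fun_prop)
    (fun a => by
      have h := Measure.map_map (μ := μX.prod (νξ.prod νζ)) (f := Prod.fst)
        (g := fun x : Fin n → ℝ => ∑ i, a i * x i) (by fun_prop) measurable_fst
      rw [pX.map_eq, hX a] at h
      exact h.symm)
    hb (fun i => by fun_prop)
    (fun i => ((measurePreserving_eval (fun _ : Fin n => laplace 0 (4 * τ / α)) i).comp pξ).map_eq)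
    (fun i k hik => indepFun_comp_measurePreserving pξ (measurable_pi_apply i)
      (measurable_pi_apply k) (hpiind _ i k hik))
    hb' (fun i => by fun_prop)
    (fun i => ((measurePreserving_eval (fun _ : Fin n => laplace 0 (4 * τ' / α)) i).comp pζ).map_eq)
    (fun i k hik => indepFun_comp_measurePreserving pζ (measurable_pi_apply i)
      (measurable_pi_apply k) (hpiind _ i k hik))
    (indepFun_prod (X := fun x : Fin n → ℝ => x)
      (Y := fun p : (Fin n → ℝ) × (Fin n → ℝ) => p.1) measurable_id measurable_fst)
    hτ.le (by positivity) (by rw [hτ'def]; nlinarith [sq_nonneg τ]) (by positivity)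
    (by
      rw [← mul_assoc 2 (Nat.factorial 8 : ℝ)]
      exact trim_error_bound_le hn6' hs hα0 hτ hτ2 rfl hL1 hL2 (by linarith))
    (j := j)
    (f := fun i => ⟨i.1 + j, by have := i.isLt; omega⟩)
    (g := fun i => ⟨i.1, by have := i.isLt; omega⟩) (fun _ => rfl) (fun _ => rfl)
  rw [hmcast] at key
  refine key.trans (ENNReal.ofReal_le_ofReal ?_)
  set mx := max (1 / (n : ℝ)) (L ^ 4 / (n * α ^ 2)) with hmx
  have hmx1 : 1 / (n : ℝ) ≤ mx := le_max_left _ _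
  have hmx2 : L ^ 4 / (n * α ^ 2) ≤ mx := le_max_right _ _
  have hmx3 : L / (n * α ^ 2) ≤ mx := by
    refine le_trans ?_ hmx2
    gcongr
    exact le_self_pow₀ hLge (by norm_num)
  have hinv : 4 / ((n : ℝ) - j) ≤ 8 / n := by
    rw [div_le_div_iff₀ (by linarith) hn0]
    linarith
  calc 4 / ((n : ℝ) - j) * (2 * M₁ + √M₁ * (16 * (4 * τ / α) ^ 2) + 16 * (4 * τ' / α) ^ 2) +
        4 * (1 / n)
      ≤ 8 / n * (2 * M₁ + √M₁ * (16 * (4 * τ / α) ^ 2) + 16 * (4 * τ' / α) ^ 2) +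
        4 * (1 / n) := by gcongr
    _ = 16 * M₁ * (1 / n) + 8 * 2048 * √M₁ * (L / (n * α ^ 2)) +
        8 * 256 * 16384 * (L ^ 4 / (n * α ^ 2)) + 4 * (1 / n) := by
        rw [hτ'def, div_pow, mul_pow, div_pow, mul_pow 4 (16 * L * τ ^ 2), mul_pow (16 * L), hτ2]
        field_simp
        ring
    _ ≤ 16 * M₁ * mx + 8 * 2048 * √M₁ * mx + 8 * 256 * 16384 * mx + 4 * mx := by gcongr
    _ = _ := by ring
end

section
/- Let α > 0. Let q : ℝ × ℝ → [0, ∞) be measurable with ∫_ℝ q(z, x) dz = 1 for every x ∈ ℝ, and suppose q(z, x) ≤ e^α · q(z, x') for all z, x, x' ∈ ℝ. Let p : ℝ → (0, ∞) be measurable with ∫ p = 1, and let ṗ : ℝ → ℝ be integrable with ∫ ṗ = 0 and ∫ ṗ(x)²/p(x) dx < ∞. Define m(z) := ∫ q(z, x) p(x) dx and ṁ(z) := ∫ q(z, x) ṗ(x) dx. Then ∫ ṁ(z)²/m(z) dz ≤ (e^α − 1)² · ∫ ṗ(x)²/p(x) dx, where the integrand ṁ(z)²/m(z) is interpreted as 0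 whenever m(z) = 0. (This is the density-level form of the first inequality of the paper's Fisher-information lemma: the Fisher information of a privatized observation is contracted by the factor (e^α − 1)² relative to that of the raw observation.) -/
open MeasureTheory Real

/-- The squared `L¹` norm of the derivative of a density is at most its Fisher information. -/
lemma sq_integral_abs_le_integral_sq_div {p pd : ℝ → ℝ} (hp_pos : ∀ x, 0 < p x)
    (hp : Integrable p) (hp_int : ∫ x, p x = 1) (hpd : Integrable pd)
    (hFI : Integrable fun x => pd x ^ 2 / p x) :
    (∫ x, |pd x|) ^ 2 ≤ ∫ x, pd x ^ 2 / p x := by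
  set c := ∫ x, |pd x| with hc
  have hle : ∫ x, 2 * c * |pd x| ≤ ∫ x, (pd x ^ 2 / p x + c ^ 2 * p x) := by
    refine integral_mono (hpd.abs.const_mul _) (hFI.add (hp.const_mul _)) fun x => ?_
    have hx := hp_pos x
    have heq : pd x ^ 2 / p x + c ^ 2 * p x - 2 * c * |pd x| =
        (|pd x| - c * p x) ^ 2 / p x := by
      rw [← sq_abs (pd x)]
      field_simp
      ring
    have hnonneg : 0 ≤ (|pd x| - c * p x) ^ 2 / p x := by positivity
    simp only
    linarith
  rw [integral_add hFI (hp.const_mul _), integral_const_mul, integral_const_mul, hp_int,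
    ← hc] at hle
  nlinarith

/-- A nonnegative function whose values have ratios at most `exp α` deviates from its mean by at
most `exp α - 1` times that mean. -/
lemma abs_sub_integral_mul_le {α : ℝ} {f p : ℝ → ℝ} (hf_nonneg : ∀ x, 0 ≤ f x)
    (hf_ldp : ∀ x x', f x ≤ exp α * f x') (hp_pos : ∀ x, 0 < p x)
    (hp : Integrable p) (hp_int : ∫ x, p x = 1) (hfp : Integrable fun x => f x * p x) (x : ℝ) :
    |f x - ∫ y, f y * p y| ≤ (exp α - 1) * ∫ y, f y * p y := by
  set m := ∫ y, f y * p y with hm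
  have hupper : f x ≤ exp α * m := by
    have h : ∫ y, f x * p y ≤ ∫ y, exp α * (f y * p y) := by
      refine integral_mono (hp.const_mul _) (hfp.const_mul _) fun y => ?_
      have := mul_le_mul_of_nonneg_right (hf_ldp x y) (hp_pos y).le
      simp only
      linarith
    rwa [integral_const_mul, integral_const_mul, hp_int, mul_one, ← hm] at h
  have hlower : m ≤ exp α * f x := by
    have h : ∫ y, f y * p y ≤ ∫ y, exp α * f x * p y :=
      integral_mono hfp (hp.const_mul _) fun y =>
        mul_le_mul_of_nonneg_right (hf_ldp y x) (hp_pos y).le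
    rwa [integral_const_mul, hp_int, mul_one, ← hm] at h
  rw [abs_le]
  have hexp := exp_pos α
  refine ⟨?_, by linarith⟩
  have hm0 : 0 ≤ m := integral_nonneg fun y => mul_nonneg (hf_nonneg y) (hp_pos y).le
  nlinarith [mul_nonneg (sq_nonneg (exp α - 1)) hm0]

/-- Averaging a family of probability densities over a probability density has total mass one. -/
lemma lintegral_ofReal_mixture {q : ℝ → ℝ → ℝ} {p : ℝ → ℝ}
    (hq_meas : Measurable (Function.uncurry q)) (hq_nonneg : ∀ z x, 0 ≤ q z x)
    (hq_int : ∀ x, ∫ z, q z x = 1) (hp_meas : Measurable p) (hp_pos : ∀ x, 0 < p x)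
    (hp : Integrable p) (hp_int : ∫ x, p x = 1)
    (hqp : ∀ z, Integrable fun x => q z x * p x) :
    ∫⁻ z, ENNReal.ofReal (∫ x, q z x * p x) = 1 := by
  have hinner : ∀ x, ∫⁻ z, ENNReal.ofReal (q z x * p x) = ENNReal.ofReal (p x) := fun x => by
    have hi : Integrable fun z => q z x := by
      by_contra h
      simpa [integral_undef h] using hq_int x
    rw [← ofReal_integral_eq_lintegral_ofReal (hi.mul_const _)
      (.of_forall fun z => mul_nonneg (hq_nonneg z x) (hp_pos x).le), integral_mul_const,
      hq_int, one_mul]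
  calc ∫⁻ z, ENNReal.ofReal (∫ x, q z x * p x)
      = ∫⁻ z, ∫⁻ x, ENNReal.ofReal (q z x * p x) := lintegral_congr fun z =>
        ofReal_integral_eq_lintegral_ofReal (hqp z)
          (.of_forall fun x => mul_nonneg (hq_nonneg z x) (hp_pos x).le)
    _ = ∫⁻ x, ∫⁻ z, ENNReal.ofReal (q z x * p x) := by
        refine lintegral_lintegral_swap (Measurable.aemeasurable ?_)
        exact (hq_meas.mul (hp_meas.comp measurable_snd)).ennreal_ofReal
    _ = 1 := by
        rw [lintegral_congr hinner, ← ofReal_integral_eq_lintegral_ofReal hp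
          (.of_forall fun x => (hp_pos x).le), hp_int, ENNReal.ofReal_one]

/-- Density-level form of the first inequality of the Fisher-information lemma:
the Fisher information of a privatized observation is contracted by the factor
`(e^α − 1)²` relative to that of the raw observation. Division by zero is `0` in
Lean, which implements the convention that `ṁ(z)²/m(z) = 0` whenever `m(z) = 0`. -/
theorem fisher_information_contraction
    (α : ℝ) (hα : 0 < α)
    (q : ℝ → ℝ → ℝ) (hq_meas : Measurable (Function.uncurry q))
    (hq_nonneg : ∀ z x, 0 ≤ q z x)
    (hq_int : ∀ x, ∫ z, q z x = 1)
    (hq_ldp : ∀ z x x', q z x ≤ Real.exp α * q z x')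
    (p : ℝ → ℝ) (hp_meas : Measurable p) (hp_pos : ∀ x, 0 < p x)
    (hp_int : ∫ x, p x = 1)
    (pd : ℝ → ℝ) (hpd_int : Integrable pd) (hpd_zero : ∫ x, pd x = 0)
    (hFI : Integrable fun x => pd x ^ 2 / p x) :
    (∫⁻ z : ℝ, ENNReal.ofReal ((∫ x, q z x * pd x) ^ 2 / ∫ x, q z x * p x)) ≤
      ENNReal.ofReal ((Real.exp α - 1) ^ 2 * ∫ x, pd x ^ 2 / p x) := by
  have hp : Integrable p := by
    by_contra h
    simp [integral_undef h] at hp_int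
  have hbound : ∀ z, ∀ᵐ x : ℝ, ‖q z x‖ ≤ exp α * q z 0 := fun z => .of_forall fun x => by
    rw [norm_of_nonneg (hq_nonneg z x)]
    exact hq_ldp z x 0
  have hqz_meas : ∀ z, AEStronglyMeasurable (q z) := fun z =>
    (hq_meas.comp measurable_prodMk_left).aestronglyMeasurable
  have hqp : ∀ z, Integrable fun x => q z x * p x := fun z =>
    hp.bdd_mul (hqz_meas z) (hbound z)
  have hqpd : ∀ z, Integrable fun x => q z x * pd x := fun z =>
    hpd_int.bdd_mul (hqz_meas z) (hbound z)
  set I := ∫ x, pd x ^ 2 / p x with hI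
  have hL1 : (∫ x, |pd x|) ^ 2 ≤ I :=
    sq_integral_abs_le_integral_sq_div hp_pos hp hp_int hpd_int hFI
  have hI0 : 0 ≤ I := (sq_nonneg _).trans hL1
  have hK0 : 0 ≤ (exp α - 1) ^ 2 * I := by positivity
  have hpointwise : ∀ z, (∫ x, q z x * pd x) ^ 2 / ∫ x, q z x * p x ≤
      (exp α - 1) ^ 2 * I * ∫ x, q z x * p x := fun z => by
    set m := ∫ x, q z x * p x with hm
    have hm0 : 0 ≤ m := integral_nonneg fun x => mul_nonneg (hq_nonneg z x) (hp_pos x).le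
    have hcenter : ∫ x, q z x * pd x = ∫ x, (q z x - m) * pd x := by
      simp_rw [sub_mul]
      rw [integral_sub (hqpd z) (hpd_int.const_mul _), integral_const_mul, hpd_zero, mul_zero,
        sub_zero]
    have habs : |∫ x, q z x * pd x| ≤ (exp α - 1) * m * ∫ x, |pd x| := by
      rw [hcenter, ← integral_const_mul, ← norm_eq_abs]
      refine norm_integral_le_of_norm_le (hpd_int.abs.const_mul _) (.of_forall fun x => ?_)
      rw [norm_mul, norm_eq_abs, norm_eq_abs]
      exact mul_le_mul_of_nonneg_right
        (abs_sub_integral_mul_le (hq_nonneg z) (hq_ldp z) hp_pos hp hp_int (hqp z) x)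
        (abs_nonneg _)
    refine div_le_of_le_mul₀ hm0 (by positivity) ?_
    calc (∫ x, q z x * pd x) ^ 2 ≤ ((exp α - 1) * m * ∫ x, |pd x|) ^ 2 :=
          sq_le_sq' (neg_le_of_abs_le habs) (le_of_abs_le habs)
      _ = ((exp α - 1) * m) ^ 2 * (∫ x, |pd x|) ^ 2 := mul_pow _ _ _
      _ ≤ ((exp α - 1) * m) ^ 2 * I := by gcongr
      _ = (exp α - 1) ^ 2 * I * m * m := by ring
  calc ∫⁻ z, ENNReal.ofReal ((∫ x, q z x * pd x) ^ 2 / ∫ x, q z x * p x)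
      ≤ ∫⁻ z, ENNReal.ofReal ((exp α - 1) ^ 2 * I) * ENNReal.ofReal (∫ x, q z x * p x) :=
        lintegral_mono fun z => by
          rw [← ENNReal.ofReal_mul hK0]
          exact ENNReal.ofReal_le_ofReal (hpointwise z)
    _ = ENNReal.ofReal ((exp α - 1) ^ 2 * I) := by
        rw [lintegral_const_mul' _ _ ENNReal.ofReal_ne_top,
          lintegral_ofReal_mixture hq_meas hq_nonneg hq_int hp_meas hp_pos hp hp_int hqp, mul_one]
end

section
/- Let α > 0 and ε > 0. Let q : ℝ × ℝ → [0, ∞) be measurable with ∫_ℝ q(z, y) dz = 1 for every y ∈ ℝ, and suppose q(z, y) ≤ e^α · q(z, y') for all z, y, y' ∈ ℝ. Let p : ℝ × ℝ → (0, ∞) be measurable with ∫∫ p = 1, and let ṗ : ℝ × ℝ → ℝ be measurable such that ṗ(x, ·) is integrable for almost every x, ∫∫ ṗ(x,y)²/p(x,y) dx dy < ∞, and, with p_X(x) := ∫ p(x, y) dy and ṗ_X(x) := ∫ ṗ(x, y) dy, also ∫ ṗ_X(x)²/p_X(x) dx < ∞. Define g(x, z) := ∫ q(z, y) p(x, y)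 dy and ġ(x, z) := ∫ q(z, y) ṗ(x, y) dy. Then ∫∫ ġ(x, z)²/g(x, z) dz dx ≤ (1 + 1/ε)(e^α − 1)² · ∫∫ ṗ(x,y)²/p(x,y) dx dy + (1 + ε) e^{2α} · ∫ ṗ_X(x)²/p_X(x) dx, where integrands of the form a²/b are interpreted as 0 whenever b = 0. (This is the density-level form of inequality (term2) of the paper's Fisher-information lemma.) -/
open MeasureTheory Real

/-- Weighted Cauchy–Schwarz inequality: `(∫ |h|)² ≤ (∫ f) (∫ h² / f)` for a positive weight `f`. -/
theorem sq_integral_abs_le_integral_mul_integral_sq_div {Y : Type*} [MeasurableSpace Y]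
    {μ : Measure Y} {f h : Y → ℝ} (hf_pos : ∀ y, 0 < f y) (hf : Integrable f μ)
    (hh : Integrable h μ) (hhf : Integrable (fun y => h y ^ 2 / f y) μ)
    (hP : 0 < ∫ y, f y ∂μ) :
    (∫ y, |h y| ∂μ) ^ 2 ≤ (∫ y, f y ∂μ) * ∫ y, h y ^ 2 / f y ∂μ := by
  set P := ∫ y, f y ∂μ
  set A := ∫ y, |h y| ∂μ
  set F := ∫ y, h y ^ 2 / f y ∂μ
  have key : 2 * (A / P) * A ≤ (A / P) ^ 2 * P + F := by
    have hint : ∫ y, 2 * (A / P) * |h y| ∂μ ≤ ∫ y, ((A / P) ^ 2 * f y + h y ^ 2 / f y) ∂μ := by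
      refine integral_mono (hh.abs.const_mul _) ((hf.const_mul _).add hhf) fun y => ?_
      have hy := hf_pos y
      have hsq : 0 ≤ (A / P * f y - |h y|) ^ 2 / f y := by positivity
      have hexp : (A / P * f y - |h y|) ^ 2 / f y =
          (A / P) ^ 2 * f y + h y ^ 2 / f y - 2 * (A / P) * |h y| := by
        rw [← sq_abs (h y)]
        field_simp
        ring
      simp only
      linarith
    rwa [integral_const_mul, integral_add (hf.const_mul _) hhf, integral_const_mul] at hint
  have hAP : 2 * (A / P) * A - (A / P) ^ 2 * P = A ^ 2 / P := by
    field_simp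
    ring
  have hle : A ^ 2 / P ≤ F := by linarith
  rw [div_le_iff₀ hP] at hle
  linarith

/-- Young's inequality for squares. -/
theorem add_sq_le_one_add_inv_mul_sq_add {ε : ℝ} (hε : 0 < ε) (a b : ℝ) :
    (a + b) ^ 2 ≤ (1 + 1 / ε) * a ^ 2 + (1 + ε) * b ^ 2 := by
  have hsq : 0 ≤ (a - ε * b) ^ 2 / ε := by positivity
  have hexp : (a - ε * b) ^ 2 / ε =
      (1 + 1 / ε) * a ^ 2 + (1 + ε) * b ^ 2 - (a + b) ^ 2 := by
    field_simp
    ring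
  linarith

/-- If the values of `k ≥ 0` agree up to a factor `E`, the information carried by the
`k`-weighted integrals of `(f, h)` is controlled by that of `(f, h)` and that of
`(∫ f, ∫ h)`. -/
theorem sq_integral_mul_div_le_of_le_mul {Y : Type*} [MeasurableSpace Y] [Nonempty Y]
    {μ : Measure Y} {k f h : Y → ℝ} {E ε : ℝ} (hE : 1 ≤ E) (hε : 0 < ε) (hk_meas : Measurable k)
    (hk_nonneg : ∀ y, 0 ≤ k y) (hk : ∀ y y', k y ≤ E * k y')
    (hf_pos : ∀ y, 0 < f y) (hf : Integrable f μ) (hh : Integrable h μ)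
    (hhf : Integrable (fun y => h y ^ 2 / f y) μ) (hP : 0 < ∫ y, f y ∂μ) :
    Integrable (fun y => k y * f y) μ ∧
    (∫ y, k y * h y ∂μ) ^ 2 / ∫ y, k y * f y ∂μ ≤
      (((1 + 1 / ε) * (E - 1) ^ 2 * (∫ y, h y ^ 2 / f y ∂μ) +
        (1 + ε) * ((∫ y, h y ∂μ) ^ 2 / ∫ y, f y ∂μ)) / ∫ y, f y ∂μ) * ∫ y, k y * f y ∂μ := by
  obtain ⟨y₀⟩ := ‹Nonempty Y›
  have hk_bdd : ∀ᵐ y ∂μ, ‖k y‖ ≤ E * k y₀ := .of_forall fun y => by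
    rw [Real.norm_of_nonneg (hk_nonneg y)]
    exact hk y y₀
  have hkf : Integrable (fun y => k y * f y) μ := hf.bdd_mul hk_meas.aestronglyMeasurable hk_bdd
  have hkh : Integrable (fun y => k y * h y) μ := hh.bdd_mul hk_meas.aestronglyMeasurable hk_bdd
  refine ⟨hkf, ?_⟩
  have hCS := sq_integral_abs_le_integral_mul_integral_sq_div hf_pos hf hh hhf hP
  set P := ∫ y, f y ∂μ with hPdef
  set A := ∫ y, |h y| ∂μ with hA
  set F := ∫ y, h y ^ 2 / f y ∂μ
  set H := ∫ y, h y ∂μ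
  set g := ∫ y, k y * f y ∂μ with hg
  have hg_nonneg : 0 ≤ g := integral_nonneg fun y => mul_nonneg (hk_nonneg y) (hf_pos y).le
  rcases hg_nonneg.eq_or_lt with hg0 | hg_pos
  · simp [← hg0]
  obtain ⟨r, hr⟩ : ∃ r, r = g / P := ⟨_, rfl⟩
  have hr_pos : 0 < r := hr ▸ div_pos hg_pos hP
  have hgr : g = r * P := by rw [hr]; field_simp
  have hk_le (y : Y) : k y ≤ E * r := by
    have hint : ∫ y', k y * f y' ∂μ ≤ ∫ y', E * (k y' * f y') ∂μ :=
      integral_mono (hf.const_mul _) (hkf.const_mul _) fun y' => by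
        have := mul_le_mul_of_nonneg_right (hk y y') (hf_pos y').le
        simp only
        linarith
    rw [integral_const_mul, integral_const_mul, ← hg, ← hPdef, hgr, ← mul_assoc] at hint
    exact le_of_mul_le_mul_right hint hP
  have hle_k (y : Y) : r ≤ E * k y := by
    have hint : ∫ y', k y' * f y' ∂μ ≤ ∫ y', E * k y * f y' ∂μ :=
      integral_mono hkf (hf.const_mul _) fun y' =>
        mul_le_mul_of_nonneg_right (hk y' y) (hf_pos y').le
    rw [integral_const_mul, ← hg, ← hPdef, hgr] at hint
    exact le_of_mul_le_mul_right hint hP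
  have hdev (y : Y) : |k y - r| ≤ (E - 1) * r := by
    rw [abs_le]
    constructor
    · by_contra! hlt
      nlinarith [hle_k y, mul_nonneg (sub_nonneg.2 hE) (sub_nonneg.2 hE)]
    · linarith [hk_le y]
  have hsplit : ∫ y, k y * h y ∂μ = (∫ y, (k y - r) * h y ∂μ) + r * H := by
    simp_rw [sub_mul]
    rw [integral_sub hkh (hh.const_mul _), integral_const_mul]
    ring
  have habs : |∫ y, (k y - r) * h y ∂μ| ≤ (E - 1) * r * A := by
    refine abs_integral_le_integral_abs.trans ?_
    rw [hA, ← integral_const_mul]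
    refine integral_mono_of_nonneg (.of_forall fun y => abs_nonneg _)
      (hh.abs.const_mul _) (.of_forall fun y => ?_)
    simp only [abs_mul]
    exact mul_le_mul_of_nonneg_right (hdev y) (abs_nonneg _)
  have hsq : (∫ y, (k y - r) * h y ∂μ) ^ 2 ≤ (E - 1) ^ 2 * r ^ 2 * (P * F) :=
    calc (∫ y, (k y - r) * h y ∂μ) ^ 2 = |∫ y, (k y - r) * h y ∂μ| ^ 2 := (sq_abs _).symm
      _ ≤ ((E - 1) * r * A) ^ 2 := pow_le_pow_left₀ (abs_nonneg _) habs 2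
      _ = (E - 1) ^ 2 * r ^ 2 * A ^ 2 := by ring
      _ ≤ _ := by gcongr
  rw [div_le_iff₀ hg_pos, hsplit]
  calc ((∫ y, (k y - r) * h y ∂μ) + r * H) ^ 2
      ≤ (1 + 1 / ε) * (∫ y, (k y - r) * h y ∂μ) ^ 2 + (1 + ε) * (r * H) ^ 2 :=
        add_sq_le_one_add_inv_mul_sq_add hε _ _
    _ ≤ (1 + 1 / ε) * ((E - 1) ^ 2 * r ^ 2 * (P * F)) + (1 + ε) * (r * H) ^ 2 := by gcongr
    _ = _ := by
      rw [hgr]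
      field_simp

/-- Mixing a density `f` through a Markov density `q` preserves total mass. -/
theorem lintegral_ofReal_integral_mul_eq {Y Z : Type*} [MeasurableSpace Y] [MeasurableSpace Z]
    {μ : Measure Y} {ν : Measure Z} [SFinite μ] [SFinite ν] {q : Z → Y → ℝ} {f : Y → ℝ}
    (hq_meas : Measurable (Function.uncurry q)) (hq_nonneg : ∀ z y, 0 ≤ q z y)
    (hq_int : ∀ y, ∫ z, q z y ∂ν = 1) (hf_meas : Measurable f) (hf_nonneg : ∀ y, 0 ≤ f y)
    (hf : Integrable f μ) (hqf : ∀ z, Integrable (fun y => q z y * f y) μ) :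
    ∫⁻ z, ENNReal.ofReal (∫ y, q z y * f y ∂μ) ∂ν = ENNReal.ofReal (∫ y, f y ∂μ) := by
  have hq_lint (y : Y) : ∫⁻ z, ENNReal.ofReal (q z y) ∂ν = 1 := by
    rw [← ofReal_integral_eq_lintegral_ofReal (.of_integral_ne_zero (by simp [hq_int]))
      (.of_forall fun z => hq_nonneg z y), hq_int, ENNReal.ofReal_one]
  calc ∫⁻ z, ENNReal.ofReal (∫ y, q z y * f y ∂μ) ∂ν
      = ∫⁻ z, ∫⁻ y, ENNReal.ofReal (q z y) * ENNReal.ofReal (f y) ∂μ ∂ν := by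
        refine lintegral_congr fun z => ?_
        rw [ofReal_integral_eq_lintegral_ofReal (hqf z)
          (.of_forall fun y => mul_nonneg (hq_nonneg z y) (hf_nonneg y))]
        simp_rw [ENNReal.ofReal_mul (hq_nonneg z _)]
    _ = ∫⁻ y, ∫⁻ z, ENNReal.ofReal (q z y) * ENNReal.ofReal (f y) ∂ν ∂μ :=
        lintegral_lintegral_swap
          (hq_meas.ennreal_ofReal.mul (hf_meas.comp measurable_snd).ennreal_ofReal).aemeasurable
    _ = ∫⁻ y, ENNReal.ofReal (f y) ∂μ := by
        refine lintegral_congr fun y => ?_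
        rw [lintegral_mul_const' _ _ ENNReal.ofReal_ne_top, hq_lint, one_mul]
    _ = _ := (ofReal_integral_eq_lintegral_ofReal hf (.of_forall hf_nonneg)).symm

/-- Density-level form of inequality (term2) of the Fisher-information lemma:
the Fisher information of `(X_i, Z_{i-1})` is bounded by
`(1 + 1/ε)(e^α − 1)²` times that of `(X_i, X_{i-1})` plus `(1 + ε)e^{2α}` times
that of `X_i`. Division by zero is `0` in Lean, implementing the convention that
`a²/b = 0` whenever `b = 0`. -/
theorem fisher_information_term2
    (α ε : ℝ) (hα : 0 < α) (hε : 0 < ε)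
    (q : ℝ → ℝ → ℝ) (hq_meas : Measurable (Function.uncurry q))
    (hq_nonneg : ∀ z y, 0 ≤ q z y)
    (hq_int : ∀ y, ∫ z, q z y = 1)
    (hq_ldp : ∀ z y y', q z y ≤ Real.exp α * q z y')
    (p : ℝ × ℝ → ℝ) (hp_meas : Measurable p) (hp_pos : ∀ w, 0 < p w)
    (hp_int : ∫ w : ℝ × ℝ, p w = 1)
    (pd : ℝ × ℝ → ℝ) (hpd_meas : Measurable pd)
    (hpd_int : ∀ᵐ x : ℝ, Integrable fun y => pd (x, y))
    (hFI2 : Integrable fun w : ℝ × ℝ => pd w ^ 2 / p w)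
    (hFI1 : Integrable fun x : ℝ => (∫ y, pd (x, y)) ^ 2 / ∫ y, p (x, y)) :
    (∫⁻ x : ℝ, ∫⁻ z : ℝ,
        ENNReal.ofReal ((∫ y, q z y * pd (x, y)) ^ 2 / ∫ y, q z y * p (x, y))) ≤
      ENNReal.ofReal
        ((1 + 1 / ε) * (Real.exp α - 1) ^ 2 * (∫ w : ℝ × ℝ, pd w ^ 2 / p w) +
          (1 + ε) * Real.exp (2 * α) *
            ∫ x : ℝ, (∫ y, pd (x, y)) ^ 2 / ∫ y, p (x, y)) := by
  have hp : Integrable p (volume.prod volume) :=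
    .of_integral_ne_zero (by rw [← Measure.volume_eq_prod, hp_int]; exact one_ne_zero)
  rw [Measure.volume_eq_prod] at hFI2
  have hE : 1 ≤ exp α := one_le_exp hα.le
  have hJ_int : Integrable fun x => (1 + 1 / ε) * (exp α - 1) ^ 2 * ∫ y, pd (x, y) ^ 2 / p (x, y) :=
    hFI2.integral_prod_left.const_mul _
  have hI_int : Integrable fun x => (1 + ε) * ((∫ y, pd (x, y)) ^ 2 / ∫ y, p (x, y)) :=
    hFI1.const_mul _
  have hpX_nonneg (x : ℝ) : 0 ≤ ∫ y, p (x, y) := integral_nonneg fun y => (hp_pos _).le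
  have hJ_nonneg (x : ℝ) : 0 ≤ ∫ y, pd (x, y) ^ 2 / p (x, y) :=
    integral_nonneg fun y => div_nonneg (sq_nonneg _) (hp_pos _).le
  have hI_nonneg (x : ℝ) : 0 ≤ (∫ y, pd (x, y)) ^ 2 / ∫ y, p (x, y) :=
    div_nonneg (sq_nonneg _) (hpX_nonneg x)
  set C : ℝ → ℝ := fun x => (1 + 1 / ε) * (exp α - 1) ^ 2 * (∫ y, pd (x, y) ^ 2 / p (x, y)) +
    (1 + ε) * ((∫ y, pd (x, y)) ^ 2 / ∫ y, p (x, y)) with hC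
  have hC_nonneg (x : ℝ) : 0 ≤ C x := by
    have := hJ_nonneg x
    have := hI_nonneg x
    positivity
  calc _ ≤ ∫⁻ x, ENNReal.ofReal (C x) := by
        refine lintegral_mono_ae ?_
        filter_upwards [hp.prod_right_ae, hFI2.prod_right_ae, hpd_int] with x hpx hFx hpdx
        have hP : 0 < ∫ y, p (x, y) := by
          rw [integral_pos_iff_support_of_nonneg (fun y => (hp_pos _).le) hpx,
            Function.support_eq_univ fun y => (hp_pos _).ne']
          simp
        have hker (z : ℝ) := sq_integral_mul_div_le_of_le_mul (k := q z) hE hε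
          (hq_meas.comp measurable_prodMk_left) (hq_nonneg z) (hq_ldp z) (fun y => hp_pos (x, y))
          hpx hpdx hFx hP
        calc _ ≤ ∫⁻ z, ENNReal.ofReal (C x / ∫ y, p (x, y)) *
                ENNReal.ofReal (∫ y, q z y * p (x, y)) := by
              refine lintegral_mono fun z => ?_
              rw [← ENNReal.ofReal_mul (div_nonneg (hC_nonneg x) hP.le)]
              exact ENNReal.ofReal_le_ofReal (hker z).2
          _ = ENNReal.ofReal (C x) := by
              rw [lintegral_const_mul' _ _ ENNReal.ofReal_ne_top,
                lintegral_ofReal_integral_mul_eq (f := fun y => p (x, y)) hq_meas hq_nonneg hq_int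
                  (hp_meas.comp measurable_prodMk_left) (fun y => (hp_pos _).le) hpx
                  fun z => (hker z).1,
                ← ENNReal.ofReal_mul (div_nonneg (hC_nonneg x) hP.le), div_mul_cancel₀ _ hP.ne']
    _ = ENNReal.ofReal (∫ x, C x) :=
        (ofReal_integral_eq_lintegral_ofReal (hJ_int.add hI_int) (.of_forall hC_nonneg)).symm
    _ ≤ _ := by
        refine ENNReal.ofReal_le_ofReal ?_
        rw [hC, integral_add hJ_int hI_int, integral_const_mul, integral_const_mul,
          Measure.volume_eq_prod, integral_prod _ hFI2]
        have hI : 0 ≤ ∫ x, (∫ y, pd (x, y)) ^ 2 / ∫ y, p (x, y) := integral_nonneg hI_nonneg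
        gcongr
        exact le_mul_of_one_le_right (by positivity) (one_le_exp (by positivity))
end

section
/- Let α > 0. Under the same hypotheses as in the previous density-level inequality — q : ℝ × ℝ → [0, ∞) measurable with ∫ q(z, y) dz = 1 for all y and q(z, y) ≤ e^α q(z, y') for all z, y, y'; p : ℝ × ℝ → (0, ∞) measurable with ∫∫ p = 1; ṗ : ℝ × ℝ → ℝ measurable with ṗ(x, ·) integrable for a.e. x, ∫∫ ṗ²/p < ∞ and ∫ ṗ_X²/p_X < ∞ where p_X(x) := ∫ p(x, y) dy, ṗ_X(x) := ∫ ṗ(x, y) dy — define g(x, z) := ∫ q(z, y) p(x, y) dy and ġ(x, z) := ∫ q(z, y) ṗ(x, y) dy. Then ∫∫ ġ(x, z)²/g(x, z) dz dx ≤ (1 + (9/4)(e^α − 1)²) · ( ∫∫ ṗ(x,y)²/p(x,y) dx dy + ∫ ṗ_X(x)²/p_X(x) dx ), where integrands of the form a²/b are interpreted as 0 whenever b = 0. (This is the density-level form of inequality (term3) of the paper's Fisher-information lemma, with balanced coefficients tending to 1 as α → 0.) -/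
open MeasureTheory Real

/-- Weighted Cauchy–Schwarz inequality in the form `(∫ k v)² / ∫ k u ≤ ∫ k v² / u`. -/
lemma sq_integral_div_le {Ω : Type*} [MeasurableSpace Ω] {μ : Measure Ω} {k u v : Ω → ℝ}
    (hk : ∀ y, 0 ≤ k y) (hu : ∀ y, 0 < u y)
    (hku : Integrable (fun y => k y * u y) μ) (hkv : Integrable (fun y => k y * v y) μ)
    (hkw : Integrable (fun y => k y * (v y ^ 2 / u y)) μ) :
    (∫ y, k y * v y ∂μ) ^ 2 / ∫ y, k y * u y ∂μ ≤ ∫ y, k y * (v y ^ 2 / u y) ∂μ := by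
  have hdiff (t : ℝ) :
      Integrable (fun y => k y * (v y ^ 2 / u y) - 2 * t * (k y * v y)) μ :=
    hkw.sub (hkv.const_mul _)
  have quadratic_nonneg (t : ℝ) :
      0 ≤ ∫ y, k y * (v y ^ 2 / u y) ∂μ - 2 * t * ∫ y, k y * v y ∂μ
        + t ^ 2 * ∫ y, k y * u y ∂μ := by
    rw [← integral_const_mul, ← integral_const_mul,
      ← integral_sub hkw (hkv.const_mul _),
      ← integral_add (hdiff t) (hku.const_mul _)]
    refine integral_nonneg fun y => ?_
    have hy := (hu y).ne'
    have expand : k y * (v y ^ 2 / u y) - 2 * t * (k y * v y) + t ^ 2 * (k y * u y)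
        = k y * ((v y - t * u y) ^ 2 / u y) := by
      field_simp
      ring
    simp only [Pi.zero_apply, expand]
    exact mul_nonneg (hk y) (div_nonneg (sq_nonneg _) (hu y).le)
  rcases eq_or_ne (∫ y, k y * u y ∂μ) 0 with h0 | h0
  · rw [h0, div_zero]
    exact integral_nonneg fun y => mul_nonneg (hk y) (div_nonneg (sq_nonneg _) (hu y).le)
  · have h := quadratic_nonneg ((∫ y, k y * v y ∂μ) / ∫ y, k y * u y ∂μ)
    have simplify (a b g : ℝ) (hg : g ≠ 0) :
        b - 2 * (a / g) * a + (a / g) ^ 2 * g = b - a ^ 2 / g := by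
      field_simp
      ring
    rw [simplify _ _ _ h0] at h
    linarith

/-- Integrating a nonnegative function against a kernel of probability densities preserves its
total mass. -/
lemma lintegral_lintegral_density_mul {q : ℝ → ℝ → ℝ} (hq_meas : Measurable (Function.uncurry q))
    (hq_nonneg : ∀ z y, 0 ≤ q z y) (hq_int : ∀ y, ∫ z, q z y = 1)
    {f : ℝ → ℝ} (hf : Measurable f) :
    ∫⁻ z, ∫⁻ y, ENNReal.ofReal (q z y * f y) = ∫⁻ y, ENNReal.ofReal (f y) := by
  have hmeas : Measurable (Function.uncurry fun z y => ENNReal.ofReal (q z y * f y)) :=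
    (hq_meas.mul (hf.comp measurable_snd)).ennreal_ofReal
  rw [lintegral_lintegral_swap hmeas.aemeasurable]
  refine lintegral_congr fun y => ?_
  have hqy : Measurable fun z => q z y := hq_meas.comp measurable_prodMk_right
  simp_rw [ENNReal.ofReal_mul (hq_nonneg _ y)]
  have hint : Integrable fun z => q z y :=
    not_imp_comm.1 integral_undef (by simp [hq_int y])
  rw [lintegral_mul_const _ hqy.ennreal_ofReal,
    ← ofReal_integral_eq_lintegral_ofReal hint (ae_of_all _ fun z => hq_nonneg z y), hq_int y]
  simp

/-- Density-level form of inequality (term3) of the Fisher-information lemma,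
with balanced coefficients tending to `1` as `α → 0`. Division by zero is `0` in
Lean, implementing the convention that `a²/b = 0` whenever `b = 0`. -/
theorem fisher_information_term3
    (α : ℝ) (hα : 0 < α)
    (q : ℝ → ℝ → ℝ) (hq_meas : Measurable (Function.uncurry q))
    (hq_nonneg : ∀ z y, 0 ≤ q z y)
    (hq_int : ∀ y, ∫ z, q z y = 1)
    (hq_ldp : ∀ z y y', q z y ≤ Real.exp α * q z y')
    (p : ℝ × ℝ → ℝ) (hp_meas : Measurable p) (hp_pos : ∀ w, 0 < p w)
    (hp_int : ∫ w : ℝ × ℝ, p w = 1)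
    (pd : ℝ × ℝ → ℝ) (hpd_meas : Measurable pd)
    (hpd_int : ∀ᵐ x : ℝ, Integrable fun y => pd (x, y))
    (hFI2 : Integrable fun w : ℝ × ℝ => pd w ^ 2 / p w)
    (hFI1 : Integrable fun x : ℝ => (∫ y, pd (x, y)) ^ 2 / ∫ y, p (x, y)) :
    (∫⁻ x : ℝ, ∫⁻ z : ℝ,
        ENNReal.ofReal ((∫ y, q z y * pd (x, y)) ^ 2 / ∫ y, q z y * p (x, y))) ≤
      ENNReal.ofReal
        ((1 + (9 / 4) * (Real.exp α - 1) ^ 2) *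
          ((∫ w : ℝ × ℝ, pd w ^ 2 / p w) +
            ∫ x : ℝ, (∫ y, pd (x, y)) ^ 2 / ∫ y, p (x, y))) := by
  have hp_integrable : Integrable p := not_imp_comm.1 integral_undef (by simp [hp_int])
  have hratio_nonneg (w : ℝ × ℝ) : 0 ≤ pd w ^ 2 / p w :=
    div_nonneg (sq_nonneg _) (hp_pos w).le
  have hratio_meas : Measurable fun w => pd w ^ 2 / p w := (hpd_meas.pow_const 2).div hp_meas
  have integrable_q_mul (z : ℝ) {f : ℝ → ℝ} (hf : Integrable f) :
      Integrable fun y => q z y * f y := by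
    have hqz : Measurable (q z) := hq_meas.comp measurable_prodMk_left
    refine hf.bdd_mul (c := Real.exp α * q z 0) hqz.aestronglyMeasurable (ae_of_all _ fun y => ?_)
    rw [Real.norm_of_nonneg (hq_nonneg z y)]
    exact hq_ldp z y 0
  have inner_le : ∀ᵐ x : ℝ, (∫⁻ z : ℝ,
      ENNReal.ofReal ((∫ y, q z y * pd (x, y)) ^ 2 / ∫ y, q z y * p (x, y))) ≤
        ∫⁻ y, ENNReal.ofReal (pd (x, y) ^ 2 / p (x, y)) := by
    rw [Measure.volume_eq_prod] at hp_integrable hFI2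
    filter_upwards [hpd_int, hp_integrable.prod_right_ae, hFI2.prod_right_ae] with x hpdx hpx hrx
    rw [← lintegral_lintegral_density_mul hq_meas hq_nonneg hq_int
      (f := fun y => pd (x, y) ^ 2 / p (x, y)) (hratio_meas.comp measurable_prodMk_left)]
    refine lintegral_mono fun z => ?_
    rw [← ofReal_integral_eq_lintegral_ofReal (integrable_q_mul z hrx)
      (ae_of_all _ fun y => mul_nonneg (hq_nonneg z y) (hratio_nonneg (x, y)))]
    exact ENNReal.ofReal_le_ofReal (sq_integral_div_le (hq_nonneg z) (fun y => hp_pos (x, y))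
      (integrable_q_mul z hpx) (integrable_q_mul z hpdx) (integrable_q_mul z hrx))
  refine (lintegral_mono_ae inner_le).trans ?_
  rw [← lintegral_prod (fun w : ℝ × ℝ => ENNReal.ofReal (pd w ^ 2 / p w))
      hratio_meas.ennreal_ofReal.aemeasurable, ← Measure.volume_eq_prod,
    ← ofReal_integral_eq_lintegral_ofReal hFI2 (ae_of_all _ hratio_nonneg)]
  refine ENNReal.ofReal_le_ofReal ?_
  have joint_nonneg : 0 ≤ ∫ w : ℝ × ℝ, pd w ^ 2 / p w := integral_nonneg hratio_nonneg
  have marginal_nonneg : 0 ≤ ∫ x : ℝ, (∫ y, pd (x, y)) ^ 2 / ∫ y, p (x, y) :=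
    integral_nonneg fun x =>
      div_nonneg (sq_nonneg _) (integral_nonneg fun y => (hp_pos (x, y)).le)
  exact (le_add_of_nonneg_right marginal_nonneg).trans
    (le_mul_of_one_le_left (add_nonneg joint_nonneg marginal_nonneg)
      (le_add_of_nonneg_right (by positivity)))
end

section
/- Let ℓ ≥ 1 be an integer and let M be the (ℓ+1) × (ℓ+1) real symmetric matrix with entries M_{ij} = 1 if |i − j| = 1 and M_{ij} = 0 otherwise. Let σ₀ > 0 and s ∈ ℝ with 2|s| < σ₀. Then the matrix σ₀·I + s·M is invertible and (1/2) · ‖ (σ₀·I + s·M)^{−1} · (s·M) ‖_F² ≤ s² · ℓ / (σ₀ − 2|s|)², where ‖·‖_F denotes the Frobenius (Hilbert–Schmidt) norm. -/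
open Matrix

section GenericBounds

variable {ι : Type*} [Fintype ι]

/-- Schur test for the quadratic form of a nonnegative symmetric matrix. -/
lemma abs_dotProduct_mulVec_le_of_sum_row_le {M : Matrix ι ι ℝ} {c : ℝ}
    (hnonneg : ∀ i j, 0 ≤ M i j) (hsymm : ∀ i j, M i j = M j i)
    (hrow : ∀ i, ∑ j, M i j ≤ c) (v : ι → ℝ) :
    |v ⬝ᵥ M *ᵥ v| ≤ c * (v ⬝ᵥ v) := by
  have hdiag : ∑ i, ∑ j, M i j * v i ^ 2 ≤ c * (v ⬝ᵥ v) := by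
    simp only [dotProduct, Finset.mul_sum, ← Finset.sum_mul]
    exact Finset.sum_le_sum fun i _ => by nlinarith [hrow i, sq_nonneg (v i)]
  have hswap : ∑ i, ∑ j, M i j * v j ^ 2 = ∑ i, ∑ j, M i j * v i ^ 2 := by
    rw [Finset.sum_comm]
    simp_rw [fun i j => hsymm j i]
  calc |v ⬝ᵥ M *ᵥ v| = |∑ i, ∑ j, v i * (M i j * v j)| := by
        simp only [dotProduct, mulVec, Finset.mul_sum]
    _ ≤ ∑ i, ∑ j, |v i * (M i j * v j)| :=
        (Finset.abs_sum_le_sum_abs _ _).trans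
          (Finset.sum_le_sum fun i _ => Finset.abs_sum_le_sum_abs _ _)
    _ ≤ ∑ i, ∑ j, (M i j * v i ^ 2 + M i j * v j ^ 2) / 2 := by
        refine Finset.sum_le_sum fun i _ => Finset.sum_le_sum fun j _ => ?_
        rw [abs_mul, abs_mul, abs_of_nonneg (hnonneg i j), ← sq_abs (v i), ← sq_abs (v j)]
        nlinarith [mul_nonneg (hnonneg i j) (sq_nonneg (|v i| - |v j|))]
    _ = ∑ i, ∑ j, M i j * v i ^ 2 := by
        simp only [← Finset.sum_div, Finset.sum_add_distrib, hswap]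
        ring
    _ ≤ c * (v ⬝ᵥ v) := hdiag

/-- A coercive matrix expands Euclidean lengths by at least its coercivity constant. -/
lemma sq_mul_dotProduct_le_of_coercive {A : Matrix ι ι ℝ} {δ : ℝ} (hδ : 0 ≤ δ)
    (hA : ∀ v, δ * (v ⬝ᵥ v) ≤ v ⬝ᵥ A *ᵥ v) (v : ι → ℝ) :
    δ ^ 2 * (v ⬝ᵥ v) ≤ A *ᵥ v ⬝ᵥ A *ᵥ v := by
  have hsq : 0 ≤ (A *ᵥ v - δ • v) ⬝ᵥ (A *ᵥ v - δ • v) :=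
    Finset.sum_nonneg fun i _ => mul_self_nonneg _
  simp only [sub_dotProduct, dotProduct_sub, smul_dotProduct, dotProduct_smul, smul_eq_mul,
    dotProduct_comm (A *ᵥ v) v] at hsq
  nlinarith [mul_le_mul_of_nonneg_left (hA v) hδ]

lemma isUnit_of_coercive [DecidableEq ι] {A : Matrix ι ι ℝ} {δ : ℝ} (hδ : 0 < δ)
    (hA : ∀ v, δ * (v ⬝ᵥ v) ≤ v ⬝ᵥ A *ᵥ v) : IsUnit A := by
  rw [← mulVec_injective_iff_isUnit]
  refine (injective_iff_map_eq_zero A.mulVecLin).2 fun v hv => ?_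
  have hcoer := hA v
  rw [← mulVecLin_apply, hv, dotProduct_zero] at hcoer
  have hnonneg : 0 ≤ v ⬝ᵥ v := Finset.sum_nonneg fun i _ => mul_self_nonneg _
  exact dotProduct_self_eq_zero.1 (by nlinarith)

/-- Left multiplication by the inverse of a coercive matrix contracts the Frobenius norm. -/
lemma sq_mul_sum_sq_inv_mul_le_of_coercive [DecidableEq ι] {A : Matrix ι ι ℝ} {δ : ℝ}
    (hδ : 0 < δ) (hA : ∀ v, δ * (v ⬝ᵥ v) ≤ v ⬝ᵥ A *ᵥ v) (B : Matrix ι ι ℝ) :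
    δ ^ 2 * ∑ i, ∑ j, (A⁻¹ * B) i j ^ 2 ≤ ∑ i, ∑ j, B i j ^ 2 := by
  have hmul : A * (A⁻¹ * B) = B :=
    mul_nonsing_inv_cancel_left A B ((isUnit_iff_isUnit_det A).1 (isUnit_of_coercive hδ hA))
  rw [Finset.sum_comm, Finset.sum_comm (f := fun i j => B i j ^ 2), Finset.mul_sum]
  refine Finset.sum_le_sum fun j _ => ?_
  have hcol : A *ᵥ (A⁻¹ * B).col j = B.col j := by
    conv_rhs => rw [← hmul]
    rfl
  have hlen := sq_mul_dotProduct_le_of_coercive hδ.le hA ((A⁻¹ * B).col j)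
  rw [hcol] at hlen
  simpa only [dotProduct, col_apply, ← sq] using hlen

end GenericBounds

section PathMatrix

lemma ite_abs_sub_eq_one (a b : ℕ) :
    (if |(a : ℤ) - (b : ℤ)| = 1 then (1 : ℝ) else 0) =
      (if b = a + 1 then 1 else 0) + (if a = b + 1 then 1 else 0) := by
  have hiff : |(a : ℤ) - (b : ℤ)| = 1 ↔ b = a + 1 ∨ a = b + 1 := by
    rw [abs_eq zero_le_one]
    omega
  simp only [hiff]
  split_ifs <;> first | omega | norm_num

lemma sum_ite_abs_sub_eq_one_le_two (n : ℕ) (i : Fin n) :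
    ∑ j : Fin n, (if |(i : ℤ) - (j : ℤ)| = 1 then (1 : ℝ) else 0) ≤ 2 := by
  simp only [ite_abs_sub_eq_one, Finset.sum_add_distrib, Finset.sum_boole]
  have hright : (Finset.univ.filter fun j : Fin n => (j : ℕ) = i + 1).card ≤ 1 :=
    Finset.card_le_one.2 fun a ha b hb => by
      simp only [Finset.mem_filter] at ha hb
      omega
  have hleft : (Finset.univ.filter fun j : Fin n => (i : ℕ) = j + 1).card ≤ 1 :=
    Finset.card_le_one.2 fun a ha b hb => by
      simp only [Finset.mem_filter] at ha hb
      omega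
  exact_mod_cast Nat.add_le_add hright hleft

lemma sum_sum_ite_eq_val_add_one (n : ℕ) :
    ∑ j : Fin (n + 1), ∑ i : Fin (n + 1), (if (j : ℕ) = i + 1 then (1 : ℝ) else 0) = n := by
  have hcol (k : Fin n) :
      ∑ i : Fin (n + 1), (if (k.succ : ℕ) = i + 1 then (1 : ℝ) else 0) = 1 := by
    rw [Finset.sum_eq_single k.castSucc] <;> simp [Fin.ext_iff]
    omega
  rw [Fin.sum_univ_succ]
  simp [hcol, -Fin.val_succ]

lemma sum_sum_ite_abs_sub_eq_one (n : ℕ) :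
    ∑ i : Fin (n + 1), ∑ j : Fin (n + 1),
      (if |(i : ℤ) - (j : ℤ)| = 1 then (1 : ℝ) else 0) = 2 * n := by
  simp only [ite_abs_sub_eq_one, Finset.sum_add_distrib]
  rw [Finset.sum_comm, sum_sum_ite_eq_val_add_one, two_mul]

end PathMatrix

/-- Fisher-information matrix computation from the lower-bound proof: for the
tridiagonal 0-1 matrix `M` of size `(ℓ+1) × (ℓ+1)` and `2|s| < σ₀`, the matrix
`σ₀ I + s M` is invertible and
`(1/2) ‖(σ₀ I + s M)⁻¹ (s M)‖_F² ≤ s² ℓ / (σ₀ − 2|s|)²`,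
where `‖A‖_F² = Σ_{i,j} A_{ij}²` is the squared Frobenius norm. -/
theorem fisher_info_matrix_bound
    (ℓ : ℕ) (hℓ : 1 ≤ ℓ) (σ₀ s : ℝ) (hσ₀ : 0 < σ₀) (hs : 2 * |s| < σ₀)
    (M : Matrix (Fin (ℓ + 1)) (Fin (ℓ + 1)) ℝ)
    (hM : ∀ i j : Fin (ℓ + 1), M i j = if |(i : ℤ) - (j : ℤ)| = 1 then 1 else 0) :
    IsUnit (σ₀ • (1 : Matrix (Fin (ℓ + 1)) (Fin (ℓ + 1)) ℝ) + s • M) ∧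
    (1 / 2) *
        (∑ i, ∑ j,
          (((σ₀ • (1 : Matrix (Fin (ℓ + 1)) (Fin (ℓ + 1)) ℝ) + s • M)⁻¹ * (s • M)) i j) ^ 2) ≤
      s ^ 2 * ℓ / (σ₀ - 2 * |s|) ^ 2 := by
  have hδ : 0 < σ₀ - 2 * |s| := by linarith
  have hquad := abs_dotProduct_mulVec_le_of_sum_row_le (M := M) (c := 2)
    (fun i j => by rw [hM]; split_ifs <;> norm_num)
    (fun i j => by rw [hM, hM, abs_sub_comm])
    (fun i => by simpa only [hM] using sum_ite_abs_sub_eq_one_le_two (ℓ + 1) i)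
  have hcoer (v : Fin (ℓ + 1) → ℝ) : (σ₀ - 2 * |s|) * (v ⬝ᵥ v) ≤
      v ⬝ᵥ (σ₀ • (1 : Matrix (Fin (ℓ + 1)) (Fin (ℓ + 1)) ℝ) + s • M) *ᵥ v := by
    simp only [add_mulVec, smul_mulVec, one_mulVec, dotProduct_add, dotProduct_smul, smul_eq_mul]
    have hpert : |s * (v ⬝ᵥ M *ᵥ v)| ≤ |s| * (2 * (v ⬝ᵥ v)) := by
      rw [abs_mul]
      exact mul_le_mul_of_nonneg_left (hquad v) (abs_nonneg s)
    linarith [(abs_le.1 hpert).1]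
  refine ⟨isUnit_of_coercive hδ hcoer, ?_⟩
  have hfrob : ∑ i, ∑ j, (s • M) i j ^ 2 = s ^ 2 * (2 * ℓ) := by
    simp only [Matrix.smul_apply, smul_eq_mul, mul_pow, hM, ite_pow, one_pow,
      zero_pow two_ne_zero, ← Finset.mul_sum, sum_sum_ite_abs_sub_eq_one]
  have hcontr := sq_mul_sum_sq_inv_mul_le_of_coercive hδ hcoer (s • M)
  rw [hfrob] at hcontr
  rw [le_div_iff₀ (pow_pos hδ 2)]
  linarith
end
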